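/- arXiv:2209.00986 — 8 statements merged into one kernel-verified Lean document; each statement's English description precedes it below -/
import Mathlib

section
/- Let G be a finite group and let H, K ≤ G be subgroups with (G:H) = (G:K) = n. Then P_G(H,K) = 1 if and only if H = K and H is normal in G. Consequently, tp(G) = 1 if and only if every subgroup of G is normal in G. -/
/-!
A left transversal of `H` picks one element in each left coset, so there are `|H| ^ (G:H)` of them
and `P_G(H,K)` is the proportion of those that are also right transversals of `K`. Hence
`P_G(H,K) ≤ 1`, with equality iff every left transversal of `H` is a right transversal of `K`.

Suppose this is so. Two elements in different left cosets of `H` lie in a common left transversal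
of `H`, so they also lie in different right cosets of `K`. Applied to `g` and `k * g` with `k ∈ K`,
this gives `g⁻¹ * k * g ∈ H`. Conversely, for `h ∈ H`, a left transversal containing `1` meets the
coset `K h` in an element which, by the above, lies in `h H = H` and is therefore `1`; thus `h ∈ K`.
So `H = K` is normal.
-/

open scoped Pointwise Classical

/-- `T` is simultaneously a left transversal for `H` (each left coset `gH` contains exactly one
element of `T`) and a right transversal for `K` (each right coset `Kg` contains exactly one
element of `T`). -/
def IsDoubleTransversal {G : Type*} [Group G] (H K : Subgroup G) (T : Set G) : Prop :=
  (∀ g : G, ∃! t : G, t ∈ T ∧ g⁻¹ * t ∈ H) ∧ (∀ g : G, ∃! t : G, t ∈ T ∧ t * g⁻¹ ∈ K)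

/-- `|DT_G(H,K)|`: the number of common transversals for the pair `(H, K)`. -/
noncomputable def numDT {G : Type*} [Group G] (H K : Subgroup G) : ℕ :=
  Nat.card {T : Set G // IsDoubleTransversal H K T}

/-- `P_G(H,K) = |DT_G(H,K)| / |H| ^ (G:H)`, the common transversal probability. -/
noncomputable def transProb {G : Type*} [Group G] (H K : Subgroup G) : ℚ :=
  (numDT H K : ℚ) / (Nat.card H : ℚ) ^ H.index

/-- `tp(G)`: the minimum of `P_G(H) = P_G(H,H)` over all subgroups `H ≤ G`. -/
noncomputable def tp (G : Type*) [Group G] [Finite G] : ℚ :=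
  haveI : Finite (Subgroup G) :=
    Finite.of_injective (fun H : Subgroup G => (H : Set G)) SetLike.coe_injective
  haveI : Fintype (Subgroup G) := Fintype.ofFinite _
  Finset.univ.inf' Finset.univ_nonempty (fun H : Subgroup G => transProb H H)

theorem existsUnique_subtype_iff {α : Sort*} {p : α → Prop} {q : Subtype p → Prop} :
    (∃! x, q x) ↔ ∃! x, ∃ h : p x, q ⟨x, h⟩ := by
  simp only [ExistsUnique, Subtype.exists, Subtype.forall, Subtype.mk.injEq, forall_exists_index,
    exists_and_right]

section Transversals

open Subgroup Function

variable {G : Type*} [Group G] {H K : Subgroup G}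

/-- Left transversals of `H` correspond to the sections `G ⧸ H → G` of the quotient map, a section
being identified with its range; this is the form in which they are counted. -/
noncomputable def sectionEquivLeftTransversal (H : Subgroup G) :
    {f : G ⧸ H → G // ∀ q, (f q : G ⧸ H) = q} ≃ H.LeftTransversal where
  toFun f := ⟨Set.range f.1, isComplement_range_left f.2⟩
  invFun S := ⟨fun q ↦ S.2.leftQuotientEquiv q, S.2.quotientGroupMk_leftQuotientEquiv⟩
  left_inv f := Subtype.ext <| funext <| IsComplement.leftQuotientEquiv_apply f.2
  right_inv S := Subtype.ext <| by
    simpa only [comp_def, Subtype.range_coe] using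
      S.2.leftQuotientEquiv.surjective.range_comp (Subtype.val : S.1 → G)

theorem card_leftTransversal (H : Subgroup G) [H.FiniteIndex] :
    Nat.card H.LeftTransversal = Nat.card H ^ H.index := by
  have fiberEquiv (q : G ⧸ H) : {g : G // (g : G ⧸ H) = q} ≃ H :=
    (QuotientGroup.preimageMkEquivSubgroupProdSet H {q}).trans (Equiv.prodUnique H _)
  calc
    Nat.card H.LeftTransversal = Nat.card (G ⧸ H → H) :=
      Nat.card_congr <| (sectionEquivLeftTransversal H).symm.trans <|
        Equiv.subtypePiEquivPi.trans <| Equiv.piCongrRight fiberEquiv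
    _ = Nat.card H ^ H.index := Nat.card_fun

theorem isComplement_iff_bijOn_mk {T : Set G} :
    IsComplement T H ↔ Set.BijOn (QuotientGroup.mk : G → G ⧸ H) T Set.univ := by
  rw [isComplement_subgroup_right_iff_bijective, Bijective, ← Set.injOn_iff_injective,
    ← Set.surjOn_iff_surjective]
  exact ⟨fun h ↦ ⟨Set.mapsTo_univ _ _, h⟩, fun h ↦ h.2⟩

theorem exists_isComplement_superset {s : Set G}
    (hs : s.InjOn (QuotientGroup.mk : G → G ⧸ H)) : ∃ T, s ⊆ T ∧ IsComplement T H := by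
  simp only [isComplement_iff_bijOn_mk]
  exact hs.bijOn_image.exists_extend (Set.subset_univ _) QuotientGroup.mk_surjective.range_eq.ge

theorem inv_mul_mem_of_forall_isComplement (hHK : ∀ T : Set G, IsComplement T H → IsComplement K T)
    {x y : G} (hxy : y * x⁻¹ ∈ K) : x⁻¹ * y ∈ H := by
  by_contra hne
  have hinj : Set.InjOn (QuotientGroup.mk : G → G ⧸ H) {x, y} :=
    Set.injOn_pair.2 fun h ↦ absurd (QuotientGroup.eq.1 h) hne
  obtain ⟨T, hsub, hT⟩ := exists_isComplement_superset hinj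
  obtain ⟨hx, hy⟩ := Set.pair_subset_iff.1 hsub
  have hunique := (isComplement_iff_existsUnique_mul_inv_mem.1 (hHK T hT) y).unique
    (y₁ := ⟨x, hx⟩) (y₂ := ⟨y, hy⟩) hxy (by simp)
  obtain rfl : x = y := congrArg Subtype.val hunique
  exact hne (by simp)

theorem le_of_forall_isComplement (hHK : ∀ T : Set G, IsComplement T H → IsComplement K T) :
    H ≤ K := by
  intro h hh
  obtain ⟨T, hT, one_mem⟩ := exists_isComplement_left H 1
  obtain ⟨t, ht, -⟩ := isComplement_iff_existsUnique_mul_inv_mem.1 (hHK T hT) h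
  have hth : (t : G)⁻¹ * h ∈ H := inv_mul_mem_of_forall_isComplement hHK ht
  have ht_one : t = ⟨1, one_mem⟩ :=
    (isComplement_iff_existsUnique_inv_mul_mem.1 hT h).unique hth (by simpa using hh)
  simpa [ht_one] using ht

theorem isComplement_comm_of_normal [H.Normal] {T : Set G} :
    IsComplement T H ↔ IsComplement H T := by
  rw [isComplement_iff_existsUnique_inv_mul_mem, isComplement_iff_existsUnique_mul_inv_mem]
  simp only [SetLike.mem_coe, Normal.mem_comm_iff ‹H.Normal›]

theorem forall_isComplement_iff_eq_and_normal :
    (∀ T : Set G, IsComplement T H → IsComplement K T) ↔ H = K ∧ H.Normal := by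
  constructor
  · intro hHK
    have hconj (k : G) (hk : k ∈ K) (g : G) : g⁻¹ * k * g ∈ H := by
      rw [mul_assoc]
      exact inv_mul_mem_of_forall_isComplement hHK (by simpa using hk)
    obtain rfl : H = K :=
      le_antisymm (le_of_forall_isComplement hHK) fun k hk ↦ by simpa using hconj k hk 1
    exact ⟨rfl, ⟨fun h hh g ↦ by simpa using hconj h hh g⁻¹⟩⟩
  · rintro ⟨rfl, _⟩ T hT
    exact isComplement_comm_of_normal.1 hT

theorem isDoubleTransversal_iff {T : Set G} :
    IsDoubleTransversal H K T ↔ IsComplement T H ∧ IsComplement K T := by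
  have inv_mul_mem_comm (g t : G) : g⁻¹ * t ∈ H ↔ t⁻¹ * g ∈ H := by
    rw [← inv_mem_iff, mul_inv_rev, inv_inv]
  have mul_inv_mem_comm (g t : G) : t * g⁻¹ ∈ K ↔ g * t⁻¹ ∈ K := by
    simpa only [div_eq_mul_inv] using div_mem_comm_iff
  rw [IsDoubleTransversal, isComplement_iff_existsUnique_inv_mul_mem,
    isComplement_iff_existsUnique_mul_inv_mem]
  simp only [SetLike.mem_coe, inv_mul_mem_comm, mul_inv_mem_comm, existsUnique_subtype_iff,
    exists_prop]

theorem numDT_eq_ncard (H K : Subgroup G) :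
    numDT H K = {T : H.LeftTransversal | IsComplement (K : Set G) T}.ncard := by
  simp only [numDT, isDoubleTransversal_iff]
  exact (Nat.card_congr (Equiv.subtypeSubtypeEquivSubtypeInter _ _)).symm

theorem transProb_eq_ncard_div_card (H K : Subgroup G) [H.FiniteIndex] :
    transProb H K = ({T : H.LeftTransversal | IsComplement (K : Set G) T}.ncard : ℚ) /
      Nat.card H.LeftTransversal := by
  rw [transProb, numDT_eq_ncard, card_leftTransversal, Nat.cast_pow]

end Transversals

section Probability

variable {G : Type*} [Group G] [Finite G]

theorem transProb_le_one (H K : Subgroup G) : transProb H K ≤ 1 := by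
  rw [transProb_eq_ncard_div_card]
  exact div_le_one_of_le₀ (mod_cast Set.ncard_le_card _) (Nat.cast_nonneg _)

theorem transProb_eq_one_iff (H K : Subgroup G) : transProb H K = 1 ↔ H = K ∧ H.Normal := by
  have card_ne_zero : (Nat.card H.LeftTransversal : ℚ) ≠ 0 := mod_cast Nat.card_pos.ne'
  rw [transProb_eq_ncard_div_card, div_eq_one_iff_eq card_ne_zero, Nat.cast_inj,
    ← Set.eq_univ_iff_ncard, Set.eq_univ_iff_forall, ← forall_isComplement_iff_eq_and_normal]
  exact Subtype.forall

theorem tp_eq_one_iff : tp G = 1 ↔ ∀ H : Subgroup G, transProb H H = 1 := by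
  constructor
  · intro htp H
    have tp_le : tp G ≤ transProb H H := Finset.inf'_le _ (by simp only [Finset.mem_univ])
    exact (transProb_le_one H H).antisymm (htp ▸ tp_le)
  · intro hall
    simp only [tp, hall, Finset.inf'_const]

end Probability

theorem stmt3_general (G : Type*) [Group G] [Finite G] :
    (∀ H K : Subgroup G, transProb H K = 1 ↔ H = K ∧ H.Normal) ∧
    (tp G = 1 ↔ ∀ H : Subgroup G, H.Normal) :=
  ⟨transProb_eq_one_iff, by simp only [tp_eq_one_iff, transProb_eq_one_iff, true_and]⟩

theorem stmt3 (G : Type*) [Group G] [Finite G] :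
    (∀ (H K : Subgroup G) (n : ℕ), H.index = n → K.index = n →
      (transProb H K = 1 ↔ H = K ∧ H.Normal)) ∧
    (tp G = 1 ↔ ∀ H : Subgroup G, H.Normal) :=
  ⟨fun H K _ _ _ ↦ (stmt3_general G).1 H K, (stmt3_general G).2⟩
end

section
/- Let G be a finite Frobenius group with Frobenius complement H (i.e. H is a nontrivial proper subgroup of G with H ∩ gHg⁻¹ = 1 for all g ∈ G \ H), let n = (G:H) and h = |H|. Then h divides n - 1 and P_G(H) = (h!/h^h)^{(n-1)/h}. -/
open scoped Pointwise Classical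

/-- `G` is a Frobenius group with Frobenius complement `H`: `H` is a nontrivial proper subgroup
of `G` and `H ∩ gHg⁻¹ = 1` for every `g ∈ G` not in `H`. -/
def IsFrobeniusComplement {G : Type*} [Group G] (H : Subgroup G) : Prop :=
  H ≠ ⊥ ∧ H ≠ ⊤ ∧ ∀ g : G, g ∉ H → H ⊓ MulAut.conj g • H = ⊥

/-!
A common transversal of `H` and `K` amounts to a bijection `σ` from left cosets of `H` to right
cosets of `K` together with a choice of an element of `a ∩ σ a` for each left coset `a`. Such an
intersection is nonempty exactly when both cosets lie in the same double coset `K g H`, and its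
size depends only on that double coset. The double cosets are the orbits of `K` on `G ⧸ H`. If
`|H| = |K|` and an orbit has size `m`, the corresponding double coset consists of `m` left cosets
and `m` right cosets, pairwise intersecting in `|K| / m` elements, so it contributes
`m! * (|K| / m) ^ m` choices. Hence `P_G(H, K)` is the product of `m! / m ^ m` over the orbits.
When `K = H` is malnormal, `H` fixes the coset `H` and acts freely on the other ones.
-/

open Function MulAction
open scoped Nat

section CommonTransversal

variable {E A B Ω : Type*} {l : E → A} {r : E → B}

/-- A common transversal of the fibres of two maps `l` and `r`: a set meeting every fibre of `l`
and every fibre of `r` exactly once. -/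
def IsCommonTransversal (l : E → A) (r : E → B) (T : Set E) : Prop :=
  (Bijective fun t : T ↦ l t) ∧ Bijective fun t : T ↦ r t

lemma bijective_comp_val_iff_existsUnique {T : Set E} :
    (Bijective fun t : T ↦ l t) ↔ ∀ a, ∃! t, t ∈ T ∧ l t = a := by
  simp only [bijective_iff_existsUnique, ExistsUnique, Subtype.exists, Subtype.forall,
    Subtype.mk.injEq, and_imp, exists_prop, and_assoc]

lemma isCommonTransversal_range {σ : A ≃ B} (u : ∀ a, {e // l e = a ∧ r e = σ a}) :
    IsCommonTransversal l r (Set.range fun a ↦ (u a : E)) := by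
  have hl (a : A) : l (u a) = a := (u a).2.1
  have hr (a : A) : r (u a) = σ a := (u a).2.2
  constructor
  · refine ⟨?_, fun a ↦ ⟨⟨u a, a, rfl⟩, hl a⟩⟩
    rintro ⟨_, a, rfl⟩ ⟨_, a', rfl⟩ h
    obtain rfl : a = a' := by simpa only [hl] using h
    rfl
  · refine ⟨?_, fun b ↦ ⟨⟨u (σ.symm b), _, rfl⟩, (hr _).trans (σ.apply_symm_apply b)⟩⟩
    rintro ⟨_, a, rfl⟩ ⟨_, a', rfl⟩ h
    obtain rfl : a = a' := by simpa only [hr, σ.injective.eq_iff] using h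
    rfl

lemma IsCommonTransversal.exists_range_eq {T : Set E} (hT : IsCommonTransversal l r T) :
    ∃ (σ : A ≃ B) (u : ∀ a, {e // l e = a ∧ r e = σ a}), Set.range (fun a ↦ (u a : E)) = T := by
  let eA : T ≃ A := Equiv.ofBijective _ hT.1
  let eB : T ≃ B := Equiv.ofBijective _ hT.2
  refine ⟨eA.symm.trans eB, fun a ↦ ⟨eA.symm a, eA.apply_symm_apply a, rfl⟩, ?_⟩
  exact (eA.symm.surjective.range_comp Subtype.val).trans Subtype.range_val

lemma injective_range_sigma :
    Injective fun x : Σ σ : A ≃ B, ∀ a, {e // l e = a ∧ r e = σ a} ↦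
      Set.range fun a ↦ (x.2 a : E) := by
  rintro ⟨σ, u⟩ ⟨τ, v⟩ h
  have huv (a : A) : (u a : E) = v a := by
    obtain ⟨a', ha'⟩ : (u a : E) ∈ Set.range fun a ↦ (v a : E) := h.subset ⟨a, rfl⟩
    obtain rfl : a' = a := by rw [← (v a').2.1, ← (u a).2.1, ← ha']
    exact ha'.symm
  obtain rfl : σ = τ := Equiv.ext fun a ↦ by rw [← (u a).2.2, ← (v a).2.2, huv]
  rw [funext fun a ↦ Subtype.ext (huv a)]

-- The right-hand side is the permanent of the matrix of sizes of the fibre intersections.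
lemma card_isCommonTransversal [Finite E] [Fintype A] [Fintype B] :
    Nat.card {T // IsCommonTransversal l r T} =
      ∑ σ : A ≃ B, ∏ a, Nat.card {e // l e = a ∧ r e = σ a} := by
  let F (x : Σ σ : A ≃ B, ∀ a, {e // l e = a ∧ r e = σ a}) : {T // IsCommonTransversal l r T} :=
    ⟨_, isCommonTransversal_range x.2⟩
  have hF : Bijective F := by
    refine ⟨fun x y h ↦ injective_range_sigma (congrArg Subtype.val h), fun ⟨T, hT⟩ ↦ ?_⟩
    obtain ⟨σ, u, hu⟩ := hT.exists_range_eq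
    exact ⟨⟨σ, u⟩, Subtype.ext hu⟩
  simp only [← Nat.card_eq_of_bijective F hF, Nat.card_sigma, Nat.card_pi]

/-- Equivalences compatible with maps to a common base `Ω` are families of equivalences between
the fibres over `Ω`. -/
def equivOverEquivPi (c : A → Ω) (c' : B → Ω) :
    {σ : A ≃ B // ∀ a, c' (σ a) = c a} ≃ ∀ ω, {a // c a = ω} ≃ {b // c' b = ω} where
  toFun σ ω := σ.1.subtypeEquiv fun a ↦ by rw [σ.2]
  invFun e := ⟨Equiv.ofFiberEquiv e, Equiv.ofFiberEquiv_map e⟩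
  left_inv σ := rfl
  right_inv e := by
    ext ω ⟨a, rfl⟩
    rfl

lemma card_equivOver [Finite A] [Finite B] [Fintype Ω] {c : A → Ω} {c' : B → Ω}
    (hcard : ∀ ω, Nat.card {a // c a = ω} = Nat.card {b // c' b = ω}) :
    Nat.card {σ : A ≃ B // ∀ a, c' (σ a) = c a} = ∏ ω, (Nat.card {a // c a = ω})! := by
  rw [Nat.card_congr (equivOverEquivPi c c'), Nat.card_pi]
  refine Finset.prod_congr rfl fun ω _ ↦ ?_
  obtain ⟨e⟩ : Nonempty ({a // c a = ω} ≃ {b // c' b = ω}) := Finite.card_eq.mp (hcard ω)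
  rw [← Nat.card_perm, Nat.card_congr ((Equiv.refl _).equivCongr e.symm)]

lemma card_isCommonTransversal_of_blocks [Finite E] [Finite A] [Finite B] [Fintype Ω]
    {c : A → Ω} {c' : B → Ω} (s : Ω → ℕ)
    (hcard : ∀ ω, Nat.card {a // c a = ω} = Nat.card {b // c' b = ω})
    (hs : ∀ a b, Nat.card {e // l e = a ∧ r e = b} = if c' b = c a then s (c a) else 0) :
    Nat.card {T // IsCommonTransversal l r T} =
      ∏ ω, (Nat.card {a // c a = ω})! * s ω ^ Nat.card {a // c a = ω} := by
  have := Fintype.ofFinite A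
  have := Fintype.ofFinite B
  have hprod : ∏ a, s (c a) = ∏ ω, s ω ^ Nat.card {a // c a = ω} := by
    simp only [← Fintype.prod_fiberwise' c s, Finset.prod_const, Finset.card_univ,
      Nat.card_eq_fintype_card]
  calc Nat.card {T // IsCommonTransversal l r T}
      = ∑ σ : A ≃ B, if ∀ a, c' (σ a) = c a then ∏ a, s (c a) else 0 := by
        simp only [card_isCommonTransversal, hs, Fintype.prod_ite_zero]
    _ = Nat.card {σ : A ≃ B // ∀ a, c' (σ a) = c a} * ∏ a, s (c a) := by
        rw [← Finset.sum_filter, Finset.sum_const, ← Fintype.card_subtype,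
          Nat.card_eq_fintype_card, smul_eq_mul]
    _ = ∏ ω, (Nat.card {a // c a = ω})! * s ω ^ Nat.card {a // c a = ω} := by
        rw [card_equivOver hcard, hprod, Finset.prod_mul_distrib]

end CommonTransversal

section Orbit

variable {K X : Type*} [Group K] [MulAction K X]

lemma card_smul_eq (x y : X) :
    Nat.card {k : K // k • x = y} = if x ∈ orbit K y then Nat.card (stabilizer K y) else 0 := by
  split_ifs with h
  · obtain ⟨g, rfl⟩ := h
    exact Nat.card_congr ((Equiv.mulRight g).subtypeEquiv fun k ↦ by simp [mul_smul])
  · rw [Nat.card_eq_zero]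
    exact .inl ⟨fun ⟨k, hk⟩ ↦ h ⟨k⁻¹, inv_smul_eq_iff.mpr hk.symm⟩⟩

lemma ncard_orbit_mul_card_stabilizer (x : X) :
    (orbit K x).ncard * Nat.card (stabilizer K x) = Nat.card K := by
  rw [← index_stabilizer, Subgroup.index_mul_card]

lemma ncard_orbit_dvd (ω : orbitRel.Quotient K X) : ω.orbit.ncard ∣ Nat.card K := by
  induction ω using Quotient.inductionOn' with
  | h x => exact ⟨_, (ncard_orbit_mul_card_stabilizer x).symm⟩

lemma ncard_orbit_eq_card_fiber (ω : orbitRel.Quotient K X) :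
    ω.orbit.ncard = Nat.card {x : X // Quotient.mk'' x = ω} :=
  Nat.card_congr (Equiv.subtypeEquivRight fun _ ↦ orbitRel.Quotient.mem_orbit)

variable [Finite X]

lemma ncard_orbit_pos (ω : orbitRel.Quotient K X) : 0 < ω.orbit.ncard :=
  (Set.ncard_pos (Set.toFinite _)).mpr ω.nonempty_orbit

lemma card_stabilizer_eq_div (x : X) :
    Nat.card (stabilizer K x) = Nat.card K / (orbit K x).ncard :=
  (Nat.div_eq_of_eq_mul_right (ncard_orbit_pos (Quotient.mk'' x))
    (ncard_orbit_mul_card_stabilizer x).symm).symm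

variable (K X) in
lemma sum_ncard_orbit [Fintype (orbitRel.Quotient K X)] :
    ∑ ω : orbitRel.Quotient K X, ω.orbit.ncard = Nat.card X := by
  simp only [Nat.card_congr (selfEquivSigmaOrbits' K X), Nat.card_sigma, Nat.card_coe_set_eq]

end Orbit

section DoubleCoset

variable {G : Type*} [Group G] {H K : Subgroup G}

-- The right coset `K g` is encoded as the left coset `g⁻¹ K`, here and below.
lemma isDoubleTransversal_iff_isCommonTransversal {T : Set G} :
    IsDoubleTransversal H K T ↔
      IsCommonTransversal (fun g : G ↦ (g : G ⧸ H)) (fun g : G ↦ ((g⁻¹ : G) : G ⧸ K)) T := by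
  have hleft (g t : G) : g⁻¹ * t ∈ H ↔ (t : G ⧸ H) = g := by
    rw [eq_comm, QuotientGroup.eq]
  have hright (g t : G) : t * g⁻¹ ∈ K ↔ ((t⁻¹ : G) : G ⧸ K) = (g⁻¹ : G) := by
    rw [QuotientGroup.eq, inv_inv]
  have hinv : Surjective fun g : G ↦ ((g⁻¹ : G) : G ⧸ K) :=
    QuotientGroup.mk_surjective.comp inv_surjective
  rw [IsCommonTransversal, bijective_comp_val_iff_existsUnique,
    bijective_comp_val_iff_existsUnique (l := fun g : G ↦ ((g⁻¹ : G) : G ⧸ K)),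
    QuotientGroup.mk_surjective.forall, hinv.forall]
  simp only [IsDoubleTransversal, hleft, hright]

variable (H K) in
/-- The double coset `K g H` containing the right coset `K g`, where `K g` is encoded as `g⁻¹ K`
and `K g H` as the `K`-orbit of `g H`. -/
def invCosetOrbit : G ⧸ K → orbitRel.Quotient K (G ⧸ H) :=
  Quotient.lift (fun g ↦ Quotient.mk'' ((g⁻¹ : G) : G ⧸ H)) fun x y h ↦ by
    refine Quotient.sound ⟨⟨x⁻¹ * y, QuotientGroup.leftRel_apply.mp h⟩, ?_⟩
    change ((x⁻¹ * y * y⁻¹ : G) : G ⧸ H) = _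
    rw [mul_inv_cancel_right]

lemma invCosetOrbit_mk (g : G) : invCosetOrbit H K g = Quotient.mk'' ((g⁻¹ : G) : G ⧸ H) :=
  rfl

lemma card_invCosetOrbit_fiber [Finite G] (hcard : Nat.card H = Nat.card K)
    (ω : orbitRel.Quotient K (G ⧸ H)) :
    Nat.card {b // invCosetOrbit H K b = ω} = ω.orbit.ncard := by
  have hinv : Nat.card ((↑) ⁻¹' {b : G ⧸ K | invCosetOrbit H K b = ω} : Set G) =
      Nat.card ((↑) ⁻¹' ω.orbit : Set G) :=
    Nat.card_congr ((Equiv.inv G).subtypeEquiv fun g ↦ orbitRel.Quotient.mem_orbit.symm)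
  rw [QuotientGroup.card_preimage_mk, QuotientGroup.card_preimage_mk, hcard] at hinv
  exact Nat.eq_of_mul_eq_mul_left Nat.card_pos hinv

lemma card_leftCoset_inter_rightCoset (a : G ⧸ H) (b : G ⧸ K) :
    Nat.card {g : G // (g : G ⧸ H) = a ∧ ((g⁻¹ : G) : G ⧸ K) = b} =
      if invCosetOrbit H K b = Quotient.mk'' a then Nat.card (stabilizer K a) else 0 := by
  obtain ⟨y, rfl⟩ := QuotientGroup.mk_surjective b
  have e : {k : K // k • ((y⁻¹ : G) : G ⧸ H) = a} ≃
      {g : G // (g : G ⧸ H) = a ∧ ((g⁻¹ : G) : G ⧸ K) = y} :=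
    { toFun k := ⟨k * y⁻¹, k.2, by simp⟩
      invFun g := ⟨⟨g * y, by simpa [QuotientGroup.eq] using g.2.2⟩,
        (congrArg _ (mul_inv_cancel_right g.1 y)).trans g.2.1⟩
      left_inv k := by simp
      right_inv g := by simp }
  simp only [← Nat.card_congr e, card_smul_eq, invCosetOrbit_mk, Quotient.eq'', orbitRel_apply]

theorem numDT_eq_prod [Finite G] [Fintype (orbitRel.Quotient K (G ⧸ H))]
    (hcard : Nat.card H = Nat.card K) :
    numDT H K = ∏ ω : orbitRel.Quotient K (G ⧸ H),
      ω.orbit.ncard ! * (Nat.card K / ω.orbit.ncard) ^ ω.orbit.ncard := by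
  simp only [numDT, isDoubleTransversal_iff_isCommonTransversal, ncard_orbit_eq_card_fiber]
  refine card_isCommonTransversal_of_blocks (c := Quotient.mk'') (c' := invCosetOrbit H K)
    (fun ω ↦ Nat.card K / Nat.card {a : G ⧸ H // Quotient.mk'' a = ω})
    (fun ω ↦ ?_) fun a b ↦ ?_
  · rw [card_invCosetOrbit_fiber hcard, ncard_orbit_eq_card_fiber]
  · rw [card_leftCoset_inter_rightCoset, ← ncard_orbit_eq_card_fiber, orbitRel.Quotient.orbit_mk,
      card_stabilizer_eq_div]
    congr

theorem transProb_eq_prod [Finite G] [Fintype (orbitRel.Quotient K (G ⧸ H))]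
    (hcard : Nat.card H = Nat.card K) :
    transProb H K = ∏ ω : orbitRel.Quotient K (G ⧸ H),
      (ω.orbit.ncard ! : ℚ) / (ω.orbit.ncard : ℚ) ^ ω.orbit.ncard := by
  have hK : (Nat.card K : ℚ) ≠ 0 := Nat.cast_ne_zero.mpr Nat.card_pos.ne'
  rw [transProb, numDT_eq_prod hcard, hcard, Subgroup.index, ← sum_ncard_orbit K (G ⧸ H),
    ← Finset.prod_pow_eq_pow_sum, Nat.cast_prod, ← Finset.prod_div_distrib]
  refine Finset.prod_congr rfl fun ω _ ↦ ?_
  have hω : (ω.orbit.ncard : ℚ) ≠ 0 := Nat.cast_ne_zero.mpr (ncard_orbit_pos ω).ne'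
  push_cast [ncard_orbit_dvd ω]
  rw [div_pow]
  field_simp

end DoubleCoset

section Malnormal

variable {G : Type*} [Group G] {H : Subgroup G}

/-- A malnormal subgroup: one meeting its conjugates by elements outside it trivially. The
Frobenius complements are the malnormal subgroups that are nontrivial and proper. -/
def IsMalnormal (H : Subgroup G) : Prop :=
  ∀ g ∉ H, H ⊓ MulAut.conj g • H = ⊥

lemma IsMalnormal.stabilizer_eq_bot (hH : IsMalnormal H) {g : G} (hg : g ∉ H) :
    stabilizer H (g : G ⧸ H) = ⊥ := by
  rw [Subgroup.eq_bot_iff_forall]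
  intro k hk
  have hconj : (k : G) ∈ MulAut.conj g • H := by
    have hfix : (g : G ⧸ H) = ((k * g : G) : G ⧸ H) := Eq.symm hk
    rw [QuotientGroup.eq] at hfix
    simpa [Subgroup.mem_pointwise_smul_iff_inv_smul_mem, mul_assoc] using hfix
  have hbot : (k : G) ∈ H ⊓ MulAut.conj g • H := ⟨k.2, hconj⟩
  rw [hH g hg, Subgroup.mem_bot] at hbot
  exact Subtype.ext hbot

lemma IsMalnormal.ncard_orbit_of_ne (hH : IsMalnormal H) {ω : orbitRel.Quotient H (G ⧸ H)}
    (hω : ω ≠ Quotient.mk'' ((1 : G) : G ⧸ H)) : ω.orbit.ncard = Nat.card H := by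
  induction ω using Quotient.inductionOn' with
  | h a =>
    obtain ⟨g, rfl⟩ := QuotientGroup.mk_surjective a
    have hg : g ∉ H := fun hg ↦ hω (congrArg _ (QuotientGroup.eq.mpr (by simpa using hg)))
    have hmul := ncard_orbit_mul_card_stabilizer (K := H) (g : G ⧸ H)
    rwa [hH.stabilizer_eq_bot hg, Subgroup.card_bot, mul_one] at hmul

variable (H) in
lemma ncard_orbit_mk_one :
    (orbitRel.Quotient.orbit (Quotient.mk'' ((1 : G) : G ⧸ H) :
      orbitRel.Quotient H (G ⧸ H))).ncard = 1 := by
  rw [orbitRel.Quotient.orbit_mk, Set.ncard_eq_one]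
  refine ⟨_, Set.eq_singleton_iff_unique_mem.mpr ⟨mem_orbit_self _, ?_⟩⟩
  rintro _ ⟨k, rfl⟩
  exact QuotientGroup.eq.mpr (by simp)

variable [Finite G] [Fintype (orbitRel.Quotient H (G ⧸ H))]

lemma IsMalnormal.index_eq (hH : IsMalnormal H) :
    H.index = 1 + (Fintype.card (orbitRel.Quotient H (G ⧸ H)) - 1) * Nat.card H := by
  rw [Subgroup.index, ← sum_ncard_orbit H (G ⧸ H),
    Fintype.sum_eq_add_sum_compl (Quotient.mk'' ((1 : G) : G ⧸ H)), ncard_orbit_mk_one,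
    Finset.sum_congr rfl fun ω hω ↦ hH.ncard_orbit_of_ne (by simpa using hω),
    Finset.sum_const, Finset.card_compl, Finset.card_singleton, smul_eq_mul]

lemma IsMalnormal.transProb_eq (hH : IsMalnormal H) :
    transProb H H = ((Nat.card H)! / (Nat.card H : ℚ) ^ Nat.card H) ^
      (Fintype.card (orbitRel.Quotient H (G ⧸ H)) - 1) := by
  rw [transProb_eq_prod rfl,
    Fintype.prod_eq_mul_prod_compl (Quotient.mk'' ((1 : G) : G ⧸ H)), ncard_orbit_mk_one,
    Finset.prod_congr rfl fun ω hω ↦ by rw [hH.ncard_orbit_of_ne (by simpa using hω)],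
    Finset.prod_const, Finset.card_compl, Finset.card_singleton]
  simp only [Nat.factorial_one, Nat.cast_one, pow_one, div_one, one_mul]

end Malnormal

theorem stmt4 {G : Type*} [Group G] [Finite G] (H : Subgroup G)
    (hfrob : IsFrobeniusComplement H) (n h : ℕ) (hn : H.index = n) (hh : Nat.card H = h) :
    h ∣ n - 1 ∧ transProb H H = ((h.factorial : ℚ) / (h : ℚ) ^ h) ^ ((n - 1) / h) := by
  subst hn hh
  have := Fintype.ofFinite (orbitRel.Quotient H (G ⧸ H))
  have hmal : IsMalnormal H := hfrob.2.2
  have hsub : H.index - 1 =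
      (Fintype.card (orbitRel.Quotient H (G ⧸ H)) - 1) * Nat.card H := by
    rw [hmal.index_eq, Nat.add_sub_cancel_left]
  refine ⟨hsub ▸ Nat.dvd_mul_left _ _, ?_⟩
  rw [hsub, Nat.mul_div_cancel _ Nat.card_pos, hmal.transProb_eq]
end

section
/- Let s ≥ 1 and let t_1, …, t_s be positive integers with t_1 + ⋯ + t_s = n. Then n!/n^n ≤ ∏_{σ=1}^s t_σ!/t_σ^{t_σ} ≤ ((n+s)/(2n))^n. Furthermore, if exactly m of the t_σ are equal to 1, then (n-m)!/(n-m)^{n-m} ≤ ∏_{σ=1}^s t_σ!/t_σ^{t_σ} ≤ (1/2)^{s-m}. -/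
/-!
Write `f t = t! / t ^ t`. Since `a ^ a * b ^ b * (a + b).choose a` is a single term of the binomial
expansion of `(a + b) ^ (a + b)`, we have `f (a + b) ≤ f a * f b`; this gives the lower bounds,
and, with `f 2 = 1 / 2` and `f ≤ 1`, also `f t ≤ 1 / 2` for `t ≥ 2`. Parts equal to `1` contribute
the factor `f 1 = 1` and can be discarded.

For the bound `((n + s) / (2 n)) ^ n`, the product `∏ f (t σ)` is the product of the `n` numbers
`k / t σ` with `1 ≤ k ≤ t σ`. Their sum is `∑ (t σ + 1) / 2 = (n + s) / 2`, so the inequality of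
arithmetic and geometric means applies to them directly.
-/

open Finset

section ArithmeticGeometricMean

variable {ι K : Type*} [Field K] [LinearOrder K] [IsStrictOrderedRing K]

/- Bernoulli's inequality, expanded around the old mean `A`: the new mean is
`A + (x - A) / (n + 1)`, whose `(n + 1)`-st power is at least `A ^ (n + 1) + A ^ n * (x - A)`. -/
lemma pow_mul_le_mean_pow_succ (n : ℕ) {A x : K} (hA : 0 ≤ A) (hx : 0 ≤ x) :
    A ^ n * x ≤ ((n * A + x) / (n + 1)) ^ (n + 1) := by
  have mean_eq : A + (x - A) / (n + 1) = (n * A + x) / (n + 1) := by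
    field_simp
    ring
  have mean_nonneg : 0 ≤ A + (x - A) / (n + 1) := by
    rw [mean_eq]
    positivity
  calc A ^ n * x = A ^ (n + 1) + (n + 1 : ℕ) * A ^ (n + 1 - 1) * ((x - A) / (n + 1)) := by
        push_cast [Nat.add_sub_cancel]
        field_simp
        ring
    _ ≤ (A + (x - A) / (n + 1)) ^ (n + 1) :=
        pow_add_mul_le_add_pow hA (by linarith) (n + 1)
    _ = _ := by rw [mean_eq]

lemma prod_le_mean_pow_card (S : Finset ι) {z : ι → K} (hz : ∀ i ∈ S, 0 ≤ z i) :
    ∏ i ∈ S, z i ≤ ((∑ i ∈ S, z i) / #S) ^ #S := by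
  induction S using Finset.cons_induction with
  | empty => simp
  | cons a S ha ih =>
    obtain ⟨hza, hzS⟩ := (forall_mem_cons ha _).1 hz
    let A := (∑ i ∈ S, z i) / #S
    have mean_nonneg : 0 ≤ A := div_nonneg (sum_nonneg hzS) (Nat.cast_nonneg _)
    have card_mul_mean : #S * A = ∑ i ∈ S, z i := by
      rcases S.eq_empty_or_nonempty with rfl | hS
      · simp
      · exact mul_div_cancel₀ _ (by exact_mod_cast hS.card_ne_zero)
    calc ∏ i ∈ S.cons a ha, z i = (∏ i ∈ S, z i) * z a := by rw [prod_cons, mul_comm]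
      _ ≤ A ^ #S * z a := mul_le_mul_of_nonneg_right (ih hzS) hza
      _ ≤ ((#S * A + z a) / (#S + 1)) ^ (#S + 1) := pow_mul_le_mean_pow_succ _ mean_nonneg hza
      _ = ((∑ i ∈ S.cons a ha, z i) / #(S.cons a ha)) ^ #(S.cons a ha) := by
        rw [card_mul_mean, sum_cons, card_cons, add_comm (z a), Nat.cast_succ]

end ArithmeticGeometricMean

lemma pow_mul_pow_mul_choose_le_add_pow {R : Type*} [CommSemiring R] [PartialOrder R]
    [IsOrderedRing R] {x y : R} (hx : 0 ≤ x) (hy : 0 ≤ y) (a b : ℕ) :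
    x ^ a * y ^ b * (a + b).choose a ≤ (x + y) ^ (a + b) := by
  rw [add_pow]
  simpa only [Nat.add_sub_cancel_left] using
    single_le_sum (f := fun k => x ^ k * y ^ (a + b - k) * ((a + b).choose k : R))
      (fun _ _ => by positivity) (mem_range.2 (by omega : a < a + b + 1))

/-- The quotient `t! / t ^ t`, the factor which a part of size `t` contributes to the product;
since `0 ^ 0 = 1`, its value at `0` is `1`. -/
def factorialRatio (t : ℕ) : ℚ := t.factorial / (t : ℚ) ^ t

lemma factorialRatio_nonneg (t : ℕ) : 0 ≤ factorialRatio t := by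
  unfold factorialRatio
  positivity

lemma factorialRatio_one : factorialRatio 1 = 1 := by
  simp [factorialRatio]

lemma factorialRatio_le_one (t : ℕ) : factorialRatio t ≤ 1 :=
  div_le_one_of_le₀ (by exact_mod_cast t.factorial_le_pow) (by positivity)

lemma factorialRatio_add_le (a b : ℕ) :
    factorialRatio (a + b) ≤ factorialRatio a * factorialRatio b := by
  have self_pow_pos (t : ℕ) : (0 : ℚ) < (t : ℚ) ^ t := by exact_mod_cast Nat.pow_self_pos
  have single_term_le : a ^ a * b ^ b * (a + b).choose a ≤ (a + b) ^ (a + b) := by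
    simpa only [Nat.cast_id] using pow_mul_pow_mul_choose_le_add_pow a.zero_le b.zero_le a b
  unfold factorialRatio
  rw [div_mul_div_comm, div_le_div_iff₀ (self_pow_pos _)
    (mul_pos (self_pow_pos _) (self_pow_pos _))]
  norm_cast
  calc (a + b).factorial * (a ^ a * b ^ b)
      = a.factorial * b.factorial * (a ^ a * b ^ b * (a + b).choose a) := by
        rw [← Nat.add_choose_mul_factorial_mul_factorial, Nat.choose_symm_add]
        ring
    _ ≤ a.factorial * b.factorial * (a + b) ^ (a + b) :=
        Nat.mul_le_mul_left _ single_term_le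

lemma factorialRatio_le_half {t : ℕ} (ht : 2 ≤ t) : factorialRatio t ≤ 1 / 2 := by
  obtain ⟨k, rfl⟩ := Nat.exists_eq_add_of_le ht
  calc factorialRatio (2 + k) ≤ factorialRatio 2 * factorialRatio k := factorialRatio_add_le 2 k
    _ ≤ factorialRatio 2 :=
        mul_le_of_le_one_right (factorialRatio_nonneg 2) (factorialRatio_le_one k)
    _ = 1 / 2 := by norm_num [factorialRatio, Nat.factorial]

lemma factorialRatio_eq_prod_range (t : ℕ) :
    factorialRatio t = ∏ k ∈ range t, ((k : ℚ) + 1) / t := by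
  rw [prod_div_distrib, prod_const, card_range, factorialRatio, ← prod_range_add_one_eq_factorial]
  push_cast
  rfl

/- Equality holds unless `t = 0`, where the sum is empty. -/
lemma sum_range_add_one_div_le (t : ℕ) :
    ∑ k ∈ range t, ((k : ℚ) + 1) / t ≤ ((t : ℚ) + 1) / 2 := by
  have gauss : (∑ k ∈ range t, ((k : ℚ) + 1)) * 2 = t * (t + 1) := by
    induction t with
    | zero => simp
    | succ t ih =>
      rw [sum_range_succ, add_mul, ih]
      push_cast
      ring
  rcases t.eq_zero_or_pos with rfl | ht
  · norm_num
  · rw [← sum_div, eq_div_of_mul_eq two_ne_zero gauss]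
    exact le_of_eq (by field_simp)

section Products

variable {ι : Type*} (S : Finset ι) (t : ι → ℕ)

lemma factorialRatio_sum_le_prod :
    factorialRatio (∑ i ∈ S, t i) ≤ ∏ i ∈ S, factorialRatio (t i) :=
  le_prod_of_submultiplicative_of_nonneg (M := Multiplicative ℕ) factorialRatio
    factorialRatio_nonneg (factorialRatio_le_one 0) factorialRatio_add_le S t

lemma prod_factorialRatio_le_pow_sum :
    ∏ i ∈ S, factorialRatio (t i) ≤
      (((∑ i ∈ S, t i : ℕ) + #S : ℚ) / (2 * (∑ i ∈ S, t i : ℕ))) ^ ∑ i ∈ S, t i := by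
  let pairs := S.sigma fun i => range (t i)
  have card_pairs : #pairs = ∑ i ∈ S, t i := by simp [pairs]
  have sum_pairs_le : ∑ p ∈ pairs, ((p.2 : ℚ) + 1) / t p.1 ≤ ((∑ i ∈ S, t i : ℕ) + #S) / 2 :=
    calc ∑ p ∈ pairs, ((p.2 : ℚ) + 1) / t p.1
        = ∑ i ∈ S, ∑ k ∈ range (t i), ((k : ℚ) + 1) / t i := sum_sigma ..
      _ ≤ ∑ i ∈ S, ((t i : ℚ) + 1) / 2 := sum_le_sum fun i _ => sum_range_add_one_div_le (t i)
      _ = ((∑ i ∈ S, t i : ℕ) + #S) / 2 := by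
        rw [← sum_div, sum_add_distrib, sum_const, nsmul_one, Nat.cast_sum]
  calc ∏ i ∈ S, factorialRatio (t i) = ∏ p ∈ pairs, ((p.2 : ℚ) + 1) / t p.1 := by
        simp only [factorialRatio_eq_prod_range, pairs, prod_sigma]
    _ ≤ ((∑ p ∈ pairs, ((p.2 : ℚ) + 1) / t p.1) / #pairs) ^ #pairs :=
        prod_le_mean_pow_card pairs fun p _ => by positivity
    _ ≤ (((∑ i ∈ S, t i : ℕ) + #S) / 2 / (∑ i ∈ S, t i : ℕ)) ^ ∑ i ∈ S, t i := by
        rw [card_pairs]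
        gcongr
    _ = _ := by rw [div_div]

lemma prod_factorialRatio_filter_ne_one :
    ∏ i ∈ S with t i ≠ 1, factorialRatio (t i) = ∏ i ∈ S, factorialRatio (t i) :=
  prod_filter_of_ne fun _ _ ratio_ne ht => ratio_ne (by rw [ht, factorialRatio_one])

lemma sum_filter_ne_one :
    ∑ i ∈ S with t i ≠ 1, t i = ∑ i ∈ S, t i - #{i ∈ S | t i = 1} := by
  have sum_ones : ∑ i ∈ S with t i = 1, t i = #{i ∈ S | t i = 1} := by
    rw [card_eq_sum_ones]
    exact sum_congr rfl fun i hi => (mem_filter.1 hi).2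
  rw [← sum_filter_add_sum_filter_not S (fun i => t i = 1) t, sum_ones, Nat.add_sub_cancel_left]

lemma factorialRatio_sum_sub_card_le_prod :
    factorialRatio (∑ i ∈ S, t i - #{i ∈ S | t i = 1}) ≤ ∏ i ∈ S, factorialRatio (t i) := by
  rw [← sum_filter_ne_one, ← prod_factorialRatio_filter_ne_one]
  exact factorialRatio_sum_le_prod _ t

lemma prod_factorialRatio_le_half_pow (ht : ∀ i ∈ S, 0 < t i) :
    ∏ i ∈ S, factorialRatio (t i) ≤ (1 / 2) ^ (#S - #{i ∈ S | t i = 1}) := by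
  have card_ne_one : #{i ∈ S | t i ≠ 1} = #S - #{i ∈ S | t i = 1} := by
    rw [← card_filter_add_card_filter_not (s := S) (fun i => t i = 1), Nat.add_sub_cancel_left]
  rw [← prod_factorialRatio_filter_ne_one, ← card_ne_one, ← prod_const]
  refine prod_le_prod (fun i _ => factorialRatio_nonneg _) fun i hi => factorialRatio_le_half ?_
  obtain ⟨hiS, hi_ne⟩ := mem_filter.1 hi
  have := ht i hiS
  omega

end Products

theorem stmt6 (s : ℕ) (hs : 1 ≤ s) (t : Fin s → ℕ) (ht : ∀ σ, 0 < t σ)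
    (n : ℕ) (hn : n = ∑ σ, t σ)
    (m : ℕ) (hm : m = (Finset.univ.filter fun σ => t σ = 1).card) :
    ((n.factorial : ℚ) / (n : ℚ) ^ n ≤ ∏ σ, ((t σ).factorial : ℚ) / (t σ : ℚ) ^ t σ) ∧
    (∏ σ, ((t σ).factorial : ℚ) / (t σ : ℚ) ^ t σ ≤ (((n : ℚ) + s) / (2 * n)) ^ n) ∧
    (((n - m).factorial : ℚ) / ((n - m : ℕ) : ℚ) ^ (n - m) ≤
      ∏ σ, ((t σ).factorial : ℚ) / (t σ : ℚ) ^ t σ) ∧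
    (∏ σ, ((t σ).factorial : ℚ) / (t σ : ℚ) ^ t σ ≤ (1 / 2 : ℚ) ^ (s - m)) := by
  subst hn hm
  refine ⟨factorialRatio_sum_le_prod univ t, ?_, factorialRatio_sum_sub_card_le_prod univ t, ?_⟩
  · simpa only [factorialRatio, card_fin] using prod_factorialRatio_le_pow_sum univ t
  · simpa only [factorialRatio, card_fin] using
      prod_factorialRatio_le_half_pow univ t fun σ _ => ht σ
end

section
/- Let G be a finite group and let H, K ≤ G be subgroups with (G:H) = (G:K) = n such that at least one of H, K is not normal in G. Then P_G(H,K) ≤ (7/8)^n. In particular P_G(H,K) → 0 as n → ∞. -/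
/-!
Fix a common transversal `T₀`. Every other one replaces each `t ∈ T₀` by an element of the same
right coset `Kt`, that is, by `k t` with `k ∈ K`; since it is again a left transversal for `H`, the
resulting moves `a ↦ k a • a` permute `G ⧸ H`. Hence `P_G(H,K)` is at most the probability that
independent uniform elements of `K`, one for each point of `G ⧸ H`, permute these points. Such a
permutation preserves the `K`-orbits, and a point of an orbit of size `d` is sent to a given point
of its orbit with probability `1 / d`, so that probability is the product of `d! / d ^ d` over all
orbits.

For `d ≥ 2` the factor is at most `(7 / 8) ^ (2 * d)`, so it suffices that `K` fixes at most half of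
the points of `G ⧸ H`. As the indices agree, a fixed point has stabilizer exactly `K`. If `K` is not
normal, an element not normalizing `K` therefore moves all fixed points to non-fixed ones; if `K` is
normal, the existence of a fixed point forces `H = K`.
-/

open scoped Pointwise Classical

open scoped Nat

open MulAction Subgroup

theorem factorial_le_mul_self_pow {d : ℕ} (hd : 2 ≤ d) :
    (d ! : ℚ) ≤ ((7 / 8) ^ 2 * d) ^ d := by
  induction d, hd using Nat.le_induction with
  | base => norm_num
  | succ d hd ih =>
    have hd₀ : (0 : ℚ) < d := by positivity
    have bernoulli : 2 * (d : ℚ) ^ d ≤ (d + 1) ^ d := by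
      have h : 1 + (d : ℚ) * (1 / d) ≤ (1 + 1 / d) ^ d :=
        one_add_mul_le_pow (le_trans (by norm_num) (one_div_pos.2 hd₀).le) d
      calc 2 * (d : ℚ) ^ d = (1 + d * (1 / d)) * d ^ d := by field_simp; ring
        _ ≤ (1 + 1 / d) ^ d * d ^ d := by gcongr
        _ = (d + 1) ^ d := by rw [← mul_pow]; congr 1; field_simp
    calc ((d + 1)! : ℚ) = (d + 1) * d ! := by push_cast [Nat.factorial_succ]; ring
      _ ≤ (d + 1) * ((7 / 8) ^ 2 * d) ^ d := by gcongr
      _ = (d + 1) * ((7 / 8) ^ 2) ^ d * d ^ d := by ring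
      _ ≤ (d + 1) * ((7 / 8) ^ 2) ^ d * ((7 / 8) ^ 2 * (2 * d ^ d)) := by
          gcongr
          linarith [pow_pos hd₀ d]
      _ ≤ (d + 1) * ((7 / 8) ^ 2) ^ d * ((7 / 8) ^ 2 * (d + 1) ^ d) := by gcongr
      _ = ((7 / 8) ^ 2 * ((d + 1 : ℕ) : ℚ)) ^ (d + 1) := by
          rw [Nat.cast_succ, mul_pow _ ((d : ℚ) + 1)]; ring

section Action

variable (K X : Type*) [Group K] [MulAction K X]

/-- Families of group elements that permute `X` when each `x` is moved by its own element `k x`.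
For `X = G ⧸ H` and `K ≤ G`, they describe the ways to turn one common transversal for `(H, K)`
into another by left multiplication of its elements. -/
abbrev PermutingFamily : Type _ :=
  {k : X → K // Function.Bijective fun x => k x • x}

/-- A permuting family amounts to an orbit-preserving permutation `σ` together with a choice, for
each `x`, of an element moving `x` to `σ x`; the number of choices does not depend on `σ`. -/
noncomputable def permutingFamilyEquiv :
    PermutingFamily K X ≃
      Σ σ : {σ : Equiv.Perm X // ∀ x, σ x ∈ orbit K x}, {k : X → K // ∀ x, k x • x = σ.1 x} where
  toFun k := ⟨⟨Equiv.ofBijective _ k.2, fun x => mem_orbit x (k.1 x)⟩, k.1, fun _ => rfl⟩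
  invFun p := ⟨p.2.1, by simpa only [p.2.2] using p.1.1.bijective⟩
  left_inv _ := rfl
  right_inv p := Sigma.subtype_ext (Subtype.ext (Equiv.ext p.2.2)) rfl

variable {K X}

theorem card_smul_eq_mul_ncard_orbit {x y : X} (hy : y ∈ orbit K x) :
    Nat.card {k : K // k • x = y} * (orbit K x).ncard = Nat.card K := by
  obtain ⟨k₀, rfl⟩ := hy
  have e : {k : K // k • x = k₀ • x} ≃ stabilizer K x :=
    (Equiv.mulLeft k₀⁻¹).subtypeEquiv fun k => by
      simp [mem_stabilizer_iff, mul_smul, inv_smul_eq_iff]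
  rw [Nat.card_congr e, ← index_stabilizer, card_mul_index]

theorem ncard_orbit_eq_one_iff {x : X} : (orbit K x).ncard = 1 ↔ x ∈ fixedPoints K X := by
  rw [← subsingleton_orbit_iff_mem_fixedPoints, Set.ncard_eq_one,
    Set.exists_eq_singleton_iff_nonempty_subsingleton, and_iff_right (nonempty_orbit x)]

variable [Fintype (orbitRel.Quotient K X)]

theorem card_orbit_preserving_perm [Finite X] :
    Nat.card {σ : Equiv.Perm X // ∀ x, σ x ∈ orbit K x} =
      ∏ q : orbitRel.Quotient K X, q.orbit.ncard ! := by
  have h := DomMulAct.stabilizer_ncard (Quotient.mk'' : X → orbitRel.Quotient K X)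
  simp only [funext_iff, Function.comp_apply, Quotient.eq'', orbitRel_apply,
    ← orbitRel.Quotient.mem_orbit, Set.ofPred_mem_eq] at h
  exact (Nat.card_coe_set_eq _).symm.trans h

variable [Fintype X]

theorem prod_orbit {M : Type*} [CommMonoid M] (f : Set X → M) :
    ∏ x, f (orbit K x) = ∏ q : orbitRel.Quotient K X, f q.orbit ^ q.orbit.ncard := by
  rw [← Finset.prod_fiberwise Finset.univ (Quotient.mk'' : X → orbitRel.Quotient K X)]
  refine Finset.prod_congr rfl fun (q : orbitRel.Quotient K X) _ => ?_
  have hfiber : ({x | Quotient.mk'' x = q} : Finset X) = q.orbit.toFinset := by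
    ext x
    simp [orbitRel.Quotient.mem_orbit]
  rw [hfiber, Set.ncard_eq_toFinset_card', ← Finset.prod_const]
  refine Finset.prod_congr rfl fun x hx => ?_
  rw [← orbitRel.Quotient.mem_orbit.1 (Set.mem_toFinset.1 hx), orbitRel.Quotient.orbit_mk]

theorem card_permutingFamily_mul_prod [Finite K] :
    Nat.card (PermutingFamily K X) * ∏ x : X, (orbit K x).ncard =
      (∏ q : orbitRel.Quotient K X, q.orbit.ncard !) * Nat.card K ^ Nat.card X := by
  have hchoices (σ : {σ : Equiv.Perm X // ∀ x, σ x ∈ orbit K x}) :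
      Nat.card {k : X → K // ∀ x, k x • x = σ.1 x} * ∏ x : X, (orbit K x).ncard =
        Nat.card K ^ Nat.card X := by
    rw [Nat.card_congr (Equiv.subtypePiEquivPi (p := fun x k => k • x = σ.1 x)), Nat.card_pi,
      ← Finset.prod_mul_distrib,
      Finset.prod_congr rfl fun x _ => card_smul_eq_mul_ncard_orbit (σ.2 x), Finset.prod_const,
      Finset.card_univ, Nat.card_eq_fintype_card (α := X)]
  rw [Nat.card_congr (permutingFamilyEquiv K X), Nat.card_sigma, Finset.sum_mul,
    Finset.sum_congr rfl fun σ _ => hchoices σ, Finset.sum_const, smul_eq_mul, Finset.card_univ,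
    ← Nat.card_eq_fintype_card, card_orbit_preserving_perm]

theorem prod_factorial_ncard_orbit_le :
    ∏ q : orbitRel.Quotient K X, (q.orbit.ncard ! : ℚ) ≤
      ((7 / 8) ^ 2) ^ (fixedPoints K X)ᶜ.ncard * ∏ x : X, ((orbit K x).ncard : ℚ) := by
  let c (s : Set X) : ℚ := if s.ncard = 1 then 1 else (7 / 8) ^ 2
  have hfactor (s : Set X) : (s.ncard ! : ℚ) ≤ (c s * s.ncard) ^ s.ncard := by
    rcases lt_trichotomy s.ncard 1 with h | h | h
    · simp [Nat.lt_one_iff.1 h]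
    · simp only [c, h]; norm_num
    · simpa only [c, if_neg h.ne'] using factorial_le_mul_self_pow h
  have hc : ∏ x : X, c (orbit K x) = ((7 / 8) ^ 2) ^ (fixedPoints K X)ᶜ.ncard := by
    simp only [c, ncard_orbit_eq_one_iff]
    rw [Finset.prod_ite, Finset.prod_const_one, one_mul, Finset.prod_const,
      Set.ncard_eq_toFinset_card']
    congr 2
    ext
    simp
  calc ∏ q : orbitRel.Quotient K X, (q.orbit.ncard ! : ℚ)
      ≤ ∏ q : orbitRel.Quotient K X, (c q.orbit * q.orbit.ncard) ^ q.orbit.ncard :=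
        Finset.prod_le_prod (fun _ _ => by positivity) fun q _ => hfactor q.orbit
    _ = ∏ x : X, (c (orbit K x) * (orbit K x).ncard) :=
        (prod_orbit fun s => c s * (s.ncard : ℚ)).symm
    _ = _ := by rw [Finset.prod_mul_distrib, hc]

end Action

theorem card_permutingFamily_le (K X : Type*) [Group K] [MulAction K X] [Finite K] [Finite X] :
    (Nat.card (PermutingFamily K X) : ℚ) ≤
      ((7 / 8) ^ 2) ^ (fixedPoints K X)ᶜ.ncard * (Nat.card K : ℚ) ^ Nat.card X := by
  have := Fintype.ofFinite X
  have : Fintype (orbitRel.Quotient K X) := @Fintype.ofFinite _ (Quotient.finite _)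
  have hpos : (0 : ℚ) < ∏ x : X, ((orbit K x).ncard : ℚ) :=
    Finset.prod_pos fun x _ => by exact_mod_cast (Set.ncard_pos).2 (nonempty_orbit x)
  refine le_of_mul_le_mul_right ?_ hpos
  calc (Nat.card (PermutingFamily K X) : ℚ) * ∏ x : X, ((orbit K x).ncard : ℚ)
      = (∏ q : orbitRel.Quotient K X, (q.orbit.ncard ! : ℚ)) * (Nat.card K : ℚ) ^ Nat.card X := by
        exact_mod_cast card_permutingFamily_mul_prod
    _ ≤ ((7 / 8) ^ 2) ^ (fixedPoints K X)ᶜ.ncard * (∏ x : X, ((orbit K x).ncard : ℚ)) *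
          (Nat.card K : ℚ) ^ Nat.card X := by gcongr; exact prod_factorial_ncard_orbit_le
    _ = _ := by ring

section FixedPoints

variable {G : Type*} [Group G] {K : Subgroup G}

theorem stabilizer_eq_of_mem_fixedPoints {X : Type*} [MulAction G X] [IsPretransitive G X]
    [K.FiniteIndex] (hK : K.index = Nat.card X) {x : X} (hx : x ∈ fixedPoints K X) :
    stabilizer G x = K := by
  have hle : K ≤ stabilizer G x := fun k hk => hx ⟨k, hk⟩
  refine (hle.eq_of_not_lt fun hlt => (index_strictAnti hlt).ne ?_).symm
  rw [hK, index_stabilizer_of_transitive]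

theorem card_le_two_mul_ncard_compl_fixedPoints {X : Type*} [MulAction G X] [Finite X]
    (hstab : ∀ x ∈ fixedPoints K X, stabilizer G x = K) (hK : ¬ K.Normal) :
    Nat.card X ≤ 2 * (fixedPoints K X)ᶜ.ncard := by
  obtain ⟨y, hy⟩ : ∃ y : G, K.map (MulAut.conj y) ≠ K := by
    simpa only [normal_iff_map_conj_eq, not_forall] using hK
  have hmoved : y • fixedPoints K X ⊆ (fixedPoints K X)ᶜ := by
    rintro _ ⟨x, hx, rfl⟩ hyx
    apply hy
    calc K.map (MulAut.conj y) = (stabilizer G x).map (MulAut.conj y) := by rw [hstab x hx]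
      _ = stabilizer G (y • x) := (stabilizer_smul_eq_stabilizer_map_conj y x).symm
      _ = K := hstab _ hyx
  have hle := Set.ncard_le_ncard hmoved
  rw [Set.ncard_smul_set] at hle
  have := Set.ncard_add_ncard_compl (fixedPoints K X)
  omega

theorem eq_of_mem_fixedPoints_quotient [K.FiniteIndex] [K.Normal] {H : Subgroup G}
    (hHK : H.index = K.index) {a : G ⧸ H} (ha : a ∈ fixedPoints K (G ⧸ H)) : H = K := by
  obtain ⟨g, rfl⟩ := QuotientGroup.mk_surjective a
  have hone : ((1 : G) : G ⧸ H) ∈ fixedPoints K (G ⧸ H) := by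
    rw [← inv_mul_cancel g]
    exact smul_mem_fixedPoints_of_normal g⁻¹ ha
  rw [← stabilizer_eq_of_mem_fixedPoints hHK.symm hone, stabilizer_quotient]

theorem index_le_two_mul_ncard_compl_fixedPoints [K.FiniteIndex] {H : Subgroup G}
    (hHK : H.index = K.index) (h : H = K → ¬ K.Normal) :
    H.index ≤ 2 * (fixedPoints K (G ⧸ H))ᶜ.ncard := by
  have : Finite (G ⧸ H) := Nat.finite_of_card_ne_zero (hHK.trans_ne FiniteIndex.index_ne_zero)
  by_cases hK : K.Normal
  · have hempty : fixedPoints K (G ⧸ H) = ∅ :=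
      Set.eq_empty_of_forall_notMem fun _ ha => h (eq_of_mem_fixedPoints_quotient hHK ha) hK
    rw [hempty, Set.compl_empty, Set.ncard_univ, Subgroup.index]
    omega
  · exact card_le_two_mul_ncard_compl_fixedPoints
      (fun _ => stabilizer_eq_of_mem_fixedPoints hHK.symm) hK

end FixedPoints

namespace IsDoubleTransversal

variable {G : Type*} [Group G] {H K : Subgroup G} {T₀ T : Set G}

theorem isComplement_left (h : IsDoubleTransversal H K T) : IsComplement T H := by
  refine isComplement_iff_existsUnique_inv_mul_mem.2 fun g => ?_
  obtain ⟨t, ⟨ht, htg⟩, huniq⟩ := h.1 g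
  refine ⟨⟨t, ht⟩, ?_, fun s hs => Subtype.ext (huniq s ⟨s.2, ?_⟩)⟩
  · simpa using inv_mem htg
  · simpa using inv_mem hs

theorem isComplement_right (h : IsDoubleTransversal H K T) : IsComplement K T := by
  refine isComplement_iff_existsUnique_mul_inv_mem.2 fun g => ?_
  obtain ⟨t, ⟨ht, htg⟩, huniq⟩ := h.2 g
  refine ⟨⟨t, ht⟩, ?_, fun s hs => Subtype.ext (huniq s ⟨s.2, ?_⟩)⟩
  · simpa using inv_mem htg
  · simpa using inv_mem hs

theorem index_eq (h : IsDoubleTransversal H K T) : H.index = K.index :=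
  h.isComplement_left.card_left.symm.trans h.isComplement_right.card_right

theorem exists_permutingFamily (h₀ : IsDoubleTransversal H K T₀) (h : IsDoubleTransversal H K T) :
    ∃ k : PermutingFamily K (G ⧸ H),
      T = Set.range fun a => (k.1 a * h₀.isComplement_left.leftQuotientEquiv a : G) := by
  let s₀ : G ⧸ H ≃ T₀ := h₀.isComplement_left.leftQuotientEquiv
  let r : T₀ ≃ T :=
    h₀.isComplement_right.rightQuotientEquiv.symm.trans h.isComplement_right.rightQuotientEquiv
  have hr (t : T₀) : (r t : G) * (t : G)⁻¹ ∈ K :=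
    h.isComplement_right.toRightFun_mul_inv_mem (t : G)
  have hs₀ (a : G ⧸ H) : ((s₀ a : G) : G ⧸ H) = a :=
    h₀.isComplement_left.quotientGroupMk_leftQuotientEquiv a
  have hmove (a : G ⧸ H) : (⟨_, hr (s₀ a)⟩ : K) • a = ((r (s₀ a) : G) : G ⧸ H) := by
    calc (⟨_, hr (s₀ a)⟩ : K) • a = (⟨_, hr (s₀ a)⟩ : K) • ((s₀ a : G) : G ⧸ H) := by rw [hs₀]
      _ = ((r (s₀ a) : G) : G ⧸ H) :=
        congrArg ((↑) : G → G ⧸ H) (inv_mul_cancel_right (r (s₀ a) : G) (s₀ a))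
  refine ⟨⟨fun a => ⟨_, hr (s₀ a)⟩, ?_⟩, ?_⟩
  · simp only [hmove]
    exact ((s₀.trans r).trans h.isComplement_left.leftQuotientEquiv.symm).bijective
  · simp only [s₀, inv_mul_cancel_right]
    exact Subtype.range_coe.symm.trans ((s₀.trans r).surjective.range_comp _).symm

theorem numDT_le [Finite G] (h₀ : IsDoubleTransversal H K T₀) :
    numDT H K ≤ Nat.card (PermutingFamily K (G ⧸ H)) := by
  choose k hk using fun T : {T : Set G // IsDoubleTransversal H K T} =>
    h₀.exists_permutingFamily T.2
  exact Nat.card_le_card_of_injective k fun T T' hTT' =>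
    Subtype.ext (by rw [hk T, hk T', hTT'])

end IsDoubleTransversal

theorem card_eq_of_index_eq {G : Type*} [Group G] [Finite G] {H K : Subgroup G}
    (h : H.index = K.index) : Nat.card H = Nat.card K :=
  Nat.eq_of_mul_eq_mul_right (Nat.pos_of_ne_zero H.index_ne_zero_of_finite) <| by
    rw [card_mul_index, h, card_mul_index]

theorem IsDoubleTransversal.transProb_le {G : Type*} [Group G] [Finite G] {H K : Subgroup G}
    {T : Set G} (hT : IsDoubleTransversal H K T) :
    transProb H K ≤ (7 / 8 : ℚ) ^ (2 * (fixedPoints K (G ⧸ H))ᶜ.ncard) := by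
  have hpos : (0 : ℚ) < (Nat.card H : ℚ) ^ H.index := by
    have : 0 < Nat.card H := Nat.card_pos
    positivity
  rw [transProb, div_le_iff₀ hpos, pow_mul, card_eq_of_index_eq hT.index_eq]
  exact (Nat.cast_le.2 hT.numDT_le).trans (card_permutingFamily_le K (G ⧸ H))

theorem stmt8_general {G : Type*} [Group G] [Finite G] (H K : Subgroup G)
    (hHK : H = K → ¬ K.Normal) : transProb H K ≤ (7 / 8 : ℚ) ^ H.index := by
  by_cases hT : ∃ T, IsDoubleTransversal H K T
  · obtain ⟨T, hT⟩ := hT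
    exact hT.transProb_le.trans <| pow_le_pow_of_le_one (by norm_num) (by norm_num) <|
      index_le_two_mul_ncard_compl_fixedPoints hT.index_eq hHK
  · have hzero : numDT H K = 0 := by
      have : IsEmpty {T // IsDoubleTransversal H K T} := isEmpty_subtype _ |>.2 (not_exists.1 hT)
      exact Nat.card_of_isEmpty
    rw [transProb, hzero, Nat.cast_zero, zero_div]
    positivity

theorem stmt8 {G : Type*} [Group G] [Finite G] (H K : Subgroup G) (n : ℕ)
    (hH : H.index = n) (hK : K.index = n) (hnn : ¬ H.Normal ∨ ¬ K.Normal) :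
    transProb H K ≤ (7 / 8 : ℚ) ^ n := by
  subst hH
  exact stmt8_general H K fun hEq hN => by subst hEq; exact hnn.elim (· hN) (· hN)
end

section
/- Define f : (0,∞) → ℝ by f(x) = Γ(x+1)/x^x, where Γ is the Gamma function, and let c = (8/7)·f(4/3)^{3/4}. Then for every positive integer n and every positive integer s with s ≤ (3/4)·n, one has f(n/s)^s ≤ c^n · ((n+s)/(2n))^n. -/
/-!
For `x = n / s`, dividing the `n`-th root of the claim by `(n + s) / n` bounds the value at `x` of
`x / (x + 1) * f x ^ (1 / x) = Γ(x + 1) ^ (1 / x) / (x + 1)` by its value at `a = 4 / 3 ≤ x`; the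
factor `8 / 7` in `c` is `2 * a / (a + 1)`. So it suffices that this function is antitone. Its
logarithm is the slope, between `1` and `x + 1`, of `ψ y = log Γ(y) - (y - 1) * log y`, so it
suffices that `ψ` is concave.

By Gauss' product, `log Γ(y)` is the limit of `y log n + log n! - ∑_{m ≤ n} log (y + m)`.
Summation by parts shows that this approximant minus `(y - 1) * log y` is an affine function plus
`-(y + n) log (y + n)` plus the terms `(y + m) * (log (y + m + 1) - log (y + m))` for `m < n`.
All of these are concave, the last ones as restrictions to lines of the perspective of `log`.
-/

/-- `f(x) = Γ(x+1) / x^x` (real powers). -/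
noncomputable def fGamma (x : ℝ) : ℝ := Real.Gamma (x + 1) / x ^ x

open Filter Set Topology
open Real.BohrMollerup (logGammaSeq)

section Concave

variable {𝕜 E β ι : Type*} {s : Set E}

theorem concaveOn_of_tendsto [Semiring 𝕜] [PartialOrder 𝕜] [AddCommMonoid E] [SMul 𝕜 E]
    [AddCommMonoid β] [PartialOrder β] [TopologicalSpace β] [OrderClosedTopology β]
    [ContinuousAdd β] [SMul 𝕜 β] [ContinuousConstSMul 𝕜 β] {l : Filter ι} [l.NeBot]
    {F : ι → E → β} {f : E → β} (hF : ∀ᶠ i in l, ConcaveOn 𝕜 s (F i))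
    (hlim : ∀ x ∈ s, Tendsto (fun i => F i x) l (𝓝 (f x))) : ConcaveOn 𝕜 s f := by
  obtain ⟨_, hs, -⟩ := hF.exists
  refine ⟨hs, fun x hx y hy a b ha hb hab => ?_⟩
  exact le_of_tendsto_of_tendsto (((hlim x hx).const_smul a).add ((hlim y hy).const_smul b))
    (hlim _ (hs hx hy ha hb hab)) (hF.mono fun i hi => hi.2 hx hy ha hb hab)

theorem concaveOn_finset_sum [Semiring 𝕜] [PartialOrder 𝕜] [AddCommMonoid E] [SMul 𝕜 E]
    [AddCommMonoid β] [PartialOrder β] [IsOrderedAddMonoid β] [Module 𝕜 β] (hs : Convex 𝕜 s)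
    {t : Finset ι} {f : ι → E → β} (hf : ∀ i ∈ t, ConcaveOn 𝕜 s (f i)) :
    ConcaveOn 𝕜 s (∑ i ∈ t, f i) :=
  Finset.sum_induction f (ConcaveOn 𝕜 s) (fun _ _ => ConcaveOn.add) (concaveOn_const 0 hs) hf

theorem concaveOn_perspective [Field 𝕜] [LinearOrder 𝕜] [IsStrictOrderedRing 𝕜] [AddCommMonoid E]
    [Module 𝕜 E] [AddCommMonoid β] [PartialOrder β] [Module 𝕜 β] [PosSMulMono 𝕜 β]
    {f : E → β} (hf : ConcaveOn 𝕜 s f) :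
    ConcaveOn 𝕜 {p : 𝕜 × E | 0 < p.1 ∧ p.1⁻¹ • p.2 ∈ s} fun p => p.1 • f (p.1⁻¹ • p.2) := by
  have combo_pos {u v a b : 𝕜} (hu : 0 < u) (hv : 0 < v) (ha : 0 ≤ a) (hb : 0 ≤ b)
      (hab : a + b = 1) : 0 < a * u + b * v := convex_Ioi 0 hu hv ha hb hab
  have combo_eq {u v a b : 𝕜} (x y : E) (hu : 0 < u) (hv : 0 < v) :
      (a * u + b * v)⁻¹ • (a • x + b • y) =
        (a * u / (a * u + b * v)) • u⁻¹ • x + (b * v / (a * u + b * v)) • v⁻¹ • y := by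
    simp only [smul_add, smul_smul]
    congr 2 <;> field_simp
  constructor
  · rintro ⟨u, x⟩ ⟨hu : 0 < u, hx⟩ ⟨v, y⟩ ⟨hv : 0 < v, hy⟩ a b ha hb hab
    have hw := combo_pos hu hv ha hb hab
    refine ⟨hw, ?_⟩
    change (a * u + b * v)⁻¹ • (a • x + b • y) ∈ s
    rw [combo_eq x y hu hv]
    exact hf.1 hx hy (by positivity) (by positivity) (by field_simp)
  · rintro ⟨u, x⟩ ⟨hu : 0 < u, hx⟩ ⟨v, y⟩ ⟨hv : 0 < v, hy⟩ a b ha hb hab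
    have hw := combo_pos hu hv ha hb hab
    calc a • u • f (u⁻¹ • x) + b • v • f (v⁻¹ • y)
        = (a * u + b * v) • ((a * u / (a * u + b * v)) • f (u⁻¹ • x) +
            (b * v / (a * u + b * v)) • f (v⁻¹ • y)) := by
          simp only [smul_add, smul_smul]
          congr 2 <;> field_simp
      _ ≤ (a * u + b * v) • f ((a * u + b * v)⁻¹ • (a • x + b • y)) := by
          rw [combo_eq x y hu hv]
          exact smul_le_smul_of_nonneg_left
            (hf.2 hx hy (by positivity) (by positivity) (by field_simp)) hw.le

end Concave

theorem concaveOn_mul_log_add_one_sub_log :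
    ConcaveOn ℝ (Ioi 0) fun t : ℝ => t * (Real.log (t + 1) - Real.log t) := by
  have hlog := (concaveOn_perspective strictConcaveOn_log_Ioi.concaveOn).comp_affineMap
    ((AffineMap.id ℝ ℝ).prod (AffineMap.id ℝ ℝ + AffineMap.const ℝ ℝ 1))
  refine (hlog.subset (fun t (ht : 0 < t) => ?_) (convex_Ioi 0)).congr fun t (ht : 0 < t) => ?_
  · exact ⟨ht, show 0 < t⁻¹ * (t + 1) by positivity⟩
  · change t * Real.log (t⁻¹ * (t + 1)) = _
    rw [inv_mul_eq_div, Real.log_div (by positivity) ht.ne']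

theorem logGammaSeq_sub_mul_log (y : ℝ) (n : ℕ) :
    logGammaSeq y n - (y - 1) * Real.log y =
      ∑ m ∈ Finset.range n, (m + y) * (Real.log (m + y + 1) - Real.log (m + y)) +
        Real.negMulLog (n + y) + (y * Real.log n + Real.log n.factorial) := by
  have summand (m : ℕ) : (m + y) * (Real.log (m + y + 1) - Real.log (m + y)) =
      (((m + 1 : ℕ) + y) * Real.log ((m + 1 : ℕ) + y) - (m + y) * Real.log (m + y)) -
        Real.log (y + (m + 1 : ℕ)) := by
    push_cast
    ring_nf
  simp only [summand, Finset.sum_sub_distrib,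
    Finset.sum_range_sub fun m : ℕ => (m + y) * Real.log (m + y), logGammaSeq,
    Finset.sum_range_succ', Real.negMulLog, Nat.cast_zero, zero_add, add_zero]
  ring

theorem concaveOn_logGammaSeq_sub_mul_log (n : ℕ) :
    ConcaveOn ℝ (Ioi 0) fun y => logGammaSeq y n - (y - 1) * Real.log y := by
  have hsum : ConcaveOn ℝ (Ioi 0) (∑ m ∈ Finset.range n, fun y : ℝ =>
      (m + y) * (Real.log (m + y + 1) - Real.log (m + y))) :=
    concaveOn_finset_sum (convex_Ioi 0) fun m _ =>
      (concaveOn_mul_log_add_one_sub_log.translate_right (m : ℝ)).subset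
        (fun y (hy : 0 < y) => show 0 < m + y by positivity) (convex_Ioi 0)
  have hneg : ConcaveOn ℝ (Ioi 0) fun y : ℝ => Real.negMulLog (n + y) :=
    (Real.concaveOn_negMulLog.translate_right (n : ℝ)).subset
      (fun y (hy : 0 < y) => show 0 ≤ n + y by positivity) (convex_Ioi 0)
  have haff : ConcaveOn ℝ (Ioi 0) fun y : ℝ => y * Real.log n + Real.log n.factorial :=
    ((LinearMap.mulRight ℝ (Real.log n)).concaveOn (convex_Ioi 0)).add_const _
  refine ((hsum.add hneg).add haff).congr fun y _ => ?_
  simp only [Pi.add_apply, Finset.sum_apply, logGammaSeq_sub_mul_log]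

theorem concaveOn_log_Gamma_sub_mul_log :
    ConcaveOn ℝ (Ioi 0) fun y => Real.log (Real.Gamma y) - (y - 1) * Real.log y :=
  concaveOn_of_tendsto (.of_forall concaveOn_logGammaSeq_sub_mul_log) fun _ hy =>
    (Real.BohrMollerup.tendsto_log_gamma hy).sub_const _

theorem antitoneOn_Gamma_rpow_inv_div :
    AntitoneOn (fun x : ℝ => Real.Gamma (x + 1) ^ x⁻¹ / (x + 1)) (Ioi 0) := by
  let ψ (y : ℝ) : ℝ := Real.log (Real.Gamma y) - (y - 1) * Real.log y
  have eq_exp_slope {x : ℝ} (hx : 0 < x) :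
      Real.Gamma (x + 1) ^ x⁻¹ / (x + 1) = Real.exp (slope ψ 1 (x + 1)) := by
    have hΓ : 0 < Real.Gamma (x + 1) := Real.Gamma_pos_of_pos (by positivity)
    have hslope : slope ψ 1 (x + 1) =
        Real.log (Real.Gamma (x + 1)) * x⁻¹ - Real.log (x + 1) := by
      simp only [ψ, slope_def_field, Real.Gamma_one, Real.log_one, add_sub_cancel_right]
      field_simp
      ring
    rw [hslope, Real.exp_sub, Real.exp_log (by positivity), ← Real.rpow_def_of_pos hΓ]
  intro x (hx : 0 < x) y (hy : 0 < y) hxy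
  simp only [eq_exp_slope hx, eq_exp_slope hy]
  exact Real.exp_le_exp.2 <| concaveOn_log_Gamma_sub_mul_log.antitoneOn_slope_gt
    (mem_Ioi.2 one_pos) ⟨add_pos hx one_pos, lt_add_of_pos_left 1 hx⟩
    ⟨add_pos hy one_pos, lt_add_of_pos_left 1 hy⟩ (by gcongr)

theorem fGamma_pos {x : ℝ} (hx : 0 < x) : 0 < fGamma x :=
  div_pos (Real.Gamma_pos_of_pos (by positivity)) (Real.rpow_pos_of_pos hx x)

theorem fGamma_rpow_inv {x : ℝ} (hx : 0 < x) :
    fGamma x ^ x⁻¹ = Real.Gamma (x + 1) ^ x⁻¹ / x := by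
  rw [fGamma, Real.div_rpow (Real.Gamma_pos_of_pos (by positivity)).le (by positivity),
    Real.rpow_rpow_inv hx.le hx.ne']

theorem antitoneOn_div_mul_fGamma_rpow_inv :
    AntitoneOn (fun x : ℝ => x / (x + 1) * fGamma x ^ x⁻¹) (Ioi 0) :=
  antitoneOn_Gamma_rpow_inv_div.congr fun x (hx : 0 < x) => by
    simp only [fGamma_rpow_inv hx]
    field_simp

theorem stmt9_general {a c : ℝ} (ha : 0 < a) (hc : c = 2 * a / (a + 1) * fGamma a ^ a⁻¹)
    {n s : ℝ} (hs : 0 < s) (hns : a * s ≤ n) :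
    fGamma (n / s) ^ s ≤ c ^ n * ((n + s) / (2 * n)) ^ n := by
  have hn : 0 < n := (mul_pos ha hs).trans_le hns
  have hfa := fGamma_pos ha
  have hx : 0 < n / s := div_pos hn hs
  have hfx := fGamma_pos hx
  have root_le : fGamma (n / s) ^ (n / s)⁻¹ ≤ c * ((n + s) / (2 * n)) := by
    have anti := antitoneOn_div_mul_fGamma_rpow_inv ha hx ((le_div_iff₀ hs).2 hns)
    calc fGamma (n / s) ^ (n / s)⁻¹
        = (n + s) / n * (n / s / (n / s + 1) * fGamma (n / s) ^ (n / s)⁻¹) := by field_simp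
      _ ≤ (n + s) / n * (a / (a + 1) * fGamma a ^ a⁻¹) := by gcongr
      _ = c * ((n + s) / (2 * n)) := by rw [hc]; field_simp
  calc fGamma (n / s) ^ s
      = (fGamma (n / s) ^ (n / s)⁻¹) ^ n := by
        rw [← Real.rpow_mul hfx.le, inv_div, div_mul_cancel₀ s hn.ne']
    _ ≤ (c * ((n + s) / (2 * n))) ^ n := by gcongr
    _ = c ^ n * ((n + s) / (2 * n)) ^ n :=
        Real.mul_rpow (by rw [hc]; positivity) (by positivity)

theorem stmt9 (c : ℝ) (hc : c = (8 / 7) * fGamma (4 / 3) ^ ((3 : ℝ) / 4)) :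
    ∀ n s : ℕ, 0 < n → 0 < s → (s : ℝ) ≤ (3 / 4) * n →
      fGamma ((n : ℝ) / s) ^ (s : ℕ) ≤ c ^ n * (((n : ℝ) + s) / (2 * n)) ^ n := by
  intro n s _ hs hns
  have h := stmt9_general (a := 4 / 3) (c := c) (n := n) (s := s) (by norm_num)
    (by rw [hc]; norm_num) (by exact_mod_cast hs) (by linarith)
  simpa only [Real.rpow_natCast] using h
end

section
/- Let K ≤ H ≤ G be finite groups (K a subgroup of H and H a subgroup of G). Then P_G(K) ≤ P_H(K), where P_G(K) is the common transversal probability of K in G and P_H(K) is the common transversal probability of K in H. -/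
/-!
Let `A, B ≤ H ≤ G`. As `A ≤ H` and `B ≤ H`, the subgroup `H` is a union of left cosets of `A` and
of right cosets of `B`, so a common transversal `T` of `(A, B)` in `G` meets `H` in a common
transversal of `(A, B)` in `H`. The rest of `T` is determined by its representatives of the
`(G : A) - (H : A)` left cosets of `A` outside `H`, each chosen among `|A|` elements. Hence
`|DT_G(A, B)| ≤ |DT_H(A, B)| * |A| ^ ((G : A) - (H : A))`, and dividing by `|A| ^ (G : A)`
compares the probabilities.
-/

open scoped Pointwise Classical

section

open Subgroup MulAction

theorem existsUnique_subtype_of_imp {α : Type*} {p q : α → Prop} (hpq : ∀ x, p x → q x)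
    (h : ∃! x, p x) : ∃! x : {x // q x}, p x := by
  obtain ⟨x, hx, hunique⟩ := h
  exact ⟨⟨x, hpq x hx⟩, hx, fun y hy => Subtype.ext (hunique y hy)⟩

variable {G : Type*} [Group G] {A B H : Subgroup G} {S T : Set G}

theorem IsDoubleTransversal.isComplement (hT : IsDoubleTransversal A B T) : IsComplement T A := by
  rw [isComplement_subgroup_right_iff_existsUnique_quotientGroupMk, QuotientGroup.forall_mk]
  intro g
  simpa only [Subtype.coe_prop, true_and, ← QuotientGroup.eq, eq_comm] using
    existsUnique_subtype_of_imp (fun _ ht => ht.1) (hT.1 g)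

theorem IsDoubleTransversal.preimage_subtype (hA : A ≤ H) (hB : B ≤ H)
    (hT : IsDoubleTransversal A B T) :
    IsDoubleTransversal (A.subgroupOf H) (B.subgroupOf H) ((↑) ⁻¹' T : Set H) :=
  ⟨fun g => existsUnique_subtype_of_imp
      (fun _ ht => (H.mul_mem_cancel_left (H.inv_mem g.2)).1 (hA ht.2)) (hT.1 g),
    fun g => existsUnique_subtype_of_imp
      (fun _ ht => (H.mul_mem_cancel_right (H.inv_mem g.2)).1 (hB ht.2)) (hT.2 g)⟩

/-- The left cosets of `A` that meet `H`, encoded as the `H`-orbit of the coset `A` in `G ⧸ A`.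
When `A ≤ H` these are the left cosets contained in `H`. -/
def cosetsMeeting (A H : Subgroup G) : Set (G ⧸ A) :=
  orbit H ((1 : G) : G ⧸ A)

theorem mk_mem_cosetsMeeting (hA : A ≤ H) {g : G} : (g : G ⧸ A) ∈ cosetsMeeting A H ↔ g ∈ H := by
  constructor
  · rintro ⟨h, hg⟩
    have hgA : ((h : G) * 1)⁻¹ * g ∈ A := QuotientGroup.eq.1 hg
    rw [mul_one] at hgA
    exact (H.mul_mem_cancel_left (H.inv_mem h.2)).1 (hA hgA)
  · intro hg
    exact ⟨⟨g, hg⟩, congrArg QuotientGroup.mk (mul_one g)⟩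

theorem ncard_cosetsMeeting (A H : Subgroup G) : (cosetsMeeting A H).ncard = A.relIndex H := by
  have hstab : stabilizer H ((1 : G) : G ⧸ A) =
      (stabilizer G ((1 : G) : G ⧸ A)).subgroupOf H := rfl
  rw [cosetsMeeting, ← index_stabilizer, hstab, stabilizer_quotient, relIndex]

theorem relIndex_add_ncard_compl_cosetsMeeting [A.FiniteIndex] (H : Subgroup G) :
    A.relIndex H + (cosetsMeeting A H)ᶜ.ncard = A.index := by
  rw [← ncard_cosetsMeeting, Set.ncard_add_ncard_compl, index]

theorem card_pi_preimage_mk (A : Subgroup G) (C : Set (G ⧸ A)) [Finite C] :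
    Nat.card (∀ q : C, (QuotientGroup.mk ⁻¹' {q.1} : Set G)) = Nat.card A ^ C.ncard := by
  have := Fintype.ofFinite C
  have hcoset (q : G ⧸ A) : Nat.card (QuotientGroup.mk ⁻¹' {q} : Set G) = Nat.card A := by
    rw [QuotientGroup.card_preimage_mk, Nat.card_unique (α := ({q} : Set (G ⧸ A))),
      mul_one]
  simp only [Nat.card_pi, hcoset, Finset.prod_const, Finset.card_univ,
    ← Nat.card_eq_fintype_card, Nat.card_coe_set_eq]

theorem mem_iff_leftQuotientEquiv_mk_eq (hT : IsComplement T A) {g : G} :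
    g ∈ T ↔ (hT.leftQuotientEquiv g : G) = g :=
  ⟨fun hg => congrArg Subtype.val (hT.leftQuotientEquiv.apply_symm_apply ⟨g, hg⟩),
    fun hg => hg ▸ Subtype.coe_prop _⟩

theorem eq_of_preimage_subtype_eq_of_leftQuotientEquiv_eq (hA : A ≤ H)
    (hS : IsComplement S A) (hT : IsComplement T A)
    (hinside : ((↑) ⁻¹' S : Set H) = (↑) ⁻¹' T)
    (houtside : ∀ q ∉ cosetsMeeting A H,
      (hS.leftQuotientEquiv q : G) = hT.leftQuotientEquiv q) : S = T := by
  ext g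
  by_cases hg : g ∈ H
  · exact Set.ext_iff.1 hinside ⟨g, hg⟩
  · rw [mem_iff_leftQuotientEquiv_mk_eq hS, mem_iff_leftQuotientEquiv_mk_eq hT,
      houtside g (mt (mk_mem_cosetsMeeting hA).1 hg)]

/-- The trace on `H` of a common transversal, together with its representatives of the left
cosets of `A` outside `H`. -/
noncomputable def traceAndReps (hA : A ≤ H) (hB : B ≤ H)
    (T : {T : Set G // IsDoubleTransversal A B T}) :
    {T : Set H // IsDoubleTransversal (A.subgroupOf H) (B.subgroupOf H) T} ×
      (∀ q : ↥(cosetsMeeting A H)ᶜ, (QuotientGroup.mk ⁻¹' {q.1} : Set G)) :=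
  (⟨(↑) ⁻¹' T.1, T.2.preimage_subtype hA hB⟩, fun q =>
    ⟨T.2.isComplement.leftQuotientEquiv q.1,
      T.2.isComplement.quotientGroupMk_leftQuotientEquiv q.1⟩)

theorem traceAndReps_injective (hA : A ≤ H) (hB : B ≤ H) :
    Function.Injective (traceAndReps hA hB) := by
  intro S T hST
  obtain ⟨htrace, hreps⟩ := Prod.ext_iff.1 hST
  exact Subtype.ext <| eq_of_preimage_subtype_eq_of_leftQuotientEquiv_eq hA
    S.2.isComplement T.2.isComplement (congrArg Subtype.val htrace)
    fun q hq => congrArg Subtype.val (congrFun hreps ⟨q, hq⟩)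

theorem numDT_le_numDT_subgroupOf_mul_pow [Finite G] (hA : A ≤ H) (hB : B ≤ H) :
    numDT A B ≤ numDT (A.subgroupOf H) (B.subgroupOf H) *
      Nat.card A ^ (cosetsMeeting A H)ᶜ.ncard := by
  rw [numDT, numDT, ← card_pi_preimage_mk, ← Nat.card_prod]
  exact Nat.card_le_card_of_injective _ (traceAndReps_injective hA hB)

end

theorem stmt10_general {G : Type*} [Group G] [Finite G] (H A B : Subgroup G) (hA : A ≤ H)
    (hB : B ≤ H) : transProb A B ≤ transProb (A.subgroupOf H) (B.subgroupOf H) := by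
  set c := (cosetsMeeting A H)ᶜ.ncard
  have hpos : (0 : ℚ) < Nat.card A := mod_cast Nat.card_pos
  have hcard : Nat.card (A.subgroupOf H) = Nat.card A :=
    Nat.card_congr (Subgroup.subgroupOfEquivOfLe hA).toEquiv
  have hcount : (numDT A B : ℚ) ≤
      numDT (A.subgroupOf H) (B.subgroupOf H) * (Nat.card A : ℚ) ^ c :=
    mod_cast numDT_le_numDT_subgroupOf_mul_pow hA hB
  calc transProb A B
      = numDT A B / ((Nat.card A : ℚ) ^ A.relIndex H * (Nat.card A : ℚ) ^ c) := by
        rw [transProb, ← pow_add, relIndex_add_ncard_compl_cosetsMeeting]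
    _ ≤ numDT (A.subgroupOf H) (B.subgroupOf H) * (Nat.card A : ℚ) ^ c /
          ((Nat.card A : ℚ) ^ A.relIndex H * (Nat.card A : ℚ) ^ c) := by
        gcongr
    _ = numDT (A.subgroupOf H) (B.subgroupOf H) / (Nat.card A : ℚ) ^ A.relIndex H :=
        mul_div_mul_right _ _ (pow_pos hpos c).ne'
    _ = transProb (A.subgroupOf H) (B.subgroupOf H) := by
        rw [transProb, hcard, Subgroup.relIndex]

theorem stmt10 {G : Type*} [Group G] [Finite G] (H K : Subgroup G) (hKH : K ≤ H) :
    transProb K K ≤ transProb (K.subgroupOf H) (K.subgroupOf H) :=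
  stmt10_general H K K hKH hKH
end

section
/- Let G and K be finite groups, let f : G → K be a group homomorphism, and let H ≤ G be a subgroup containing the kernel of f. Then P_G(H) = P_{f(G)}(f(H)), where f(G) is the image of f and f(H) ≤ f(G) is the image of H under f. -/
/-!
Factoring `f` through its image, one may assume that `f = φ : G → Q` is surjective, and then
`H = φ⁻¹(L)` with `L = f(H)`. Two elements of `G` with the same image under `φ` lie in the same
coset of `H`, so a set `T` is a common transversal of `H` if and only if `φ` is injective on `T` and
`φ(T)` is a common transversal of `L`. A given common transversal `U` of `L`, which has `(Q : L)`
elements, is therefore the image of exactly `|ker φ| ^ (Q : L)` common transversals of `H`, one for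
each choice of a preimage of every element of `U`. As `(G : H) = (Q : L)` and
`|H| = |L| * |ker φ|`, this factor cancels in `P_G(H)`.
-/

open scoped Pointwise Classical

section Sections

variable {α β : Type*} {f : α → β} {T : Set α}

theorem existsUnique_mem_image_iff (hf : Set.InjOn f T) (p : β → Prop) :
    (∃! u, u ∈ f '' T ∧ p u) ↔ ∃! t, t ∈ T ∧ p (f t) := by
  constructor
  · rintro ⟨_, ⟨⟨t, ht, rfl⟩, hp⟩, huniq⟩
    exact ⟨t, ⟨ht, hp⟩, fun t' ⟨ht', hp'⟩ => hf ht' ht (huniq _ ⟨⟨t', ht', rfl⟩, hp'⟩)⟩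
  · rintro ⟨t, ⟨ht, hp⟩, huniq⟩
    refine ⟨f t, ⟨⟨t, ht, rfl⟩, hp⟩, ?_⟩
    rintro _ ⟨⟨t', ht', rfl⟩, hp'⟩
    rw [huniq t' ⟨ht', hp'⟩]

theorem bijOn_range_of_section {U : Set β} {s : U → α} (hs : ∀ u, f (s u) = u) :
    Set.BijOn f (Set.range s) U := by
  refine ⟨?_, ?_, fun u hu => ⟨s ⟨u, hu⟩, ⟨_, rfl⟩, hs _⟩⟩
  · rintro _ ⟨u, rfl⟩
    exact (hs u).symm ▸ u.2
  · rintro _ ⟨u, rfl⟩ _ ⟨v, rfl⟩ huv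
    exact congrArg s (Subtype.ext ((hs u).symm.trans (huv.trans (hs v))))

/-- The sets that `f` maps bijectively onto `U` correspond to the sections of `f` over `U`, a set
being recovered as the range of its section. This counts the lifts of a transversal. -/
noncomputable def bijOnEquivSections (f : α → β) (U : Set β) :
    {T : Set α // Set.BijOn f T U} ≃ ∀ u : U, f ⁻¹' {(u : β)} where
  toFun T u := ⟨(T.2.equiv f).symm u, congrArg Subtype.val ((T.2.equiv f).apply_symm_apply u)⟩
  invFun s := ⟨Set.range fun u => (s u : α), bijOn_range_of_section fun u => (s u).2⟩
  left_inv T := Subtype.ext <|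
    ((T.2.equiv f).symm.surjective.range_comp Subtype.val).trans Subtype.range_coe
  right_inv s := by
    have hbij := bijOn_range_of_section (f := f) (s := fun u => (s u : α)) fun u => (s u).2
    have hsymm (u : U) : (hbij.equiv f).symm u = ⟨s u, u, rfl⟩ :=
      (Equiv.symm_apply_eq _).2 (Subtype.ext (s u).2.symm)
    exact funext fun u => Subtype.ext (congrArg Subtype.val (hsymm u) :)

end Sections

section Comap

variable {G Q : Type*} [Group G] [Group Q] {φ : G →* Q} {L M : Subgroup Q}

namespace IsDoubleTransversal

theorem isComplement_s11 {T : Set Q} (hT : IsDoubleTransversal L M T) :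
    Subgroup.IsComplement T (L : Set Q) := by
  rw [Subgroup.isComplement_subgroup_right_iff_existsUnique_quotientGroupMk,
    QuotientGroup.forall_mk]
  intro g
  obtain ⟨t, ⟨ht, hg⟩, huniq⟩ := hT.1 g
  exact ⟨⟨t, ht⟩, (QuotientGroup.eq.2 hg).symm, fun t' ht' =>
    Subtype.ext (huniq t' ⟨t'.2, QuotientGroup.eq.1 ht'.symm⟩)⟩

theorem injOn {T : Set G} (hT : IsDoubleTransversal (L.comap φ) (M.comap φ) T) :
    Set.InjOn φ T := by
  intro t ht t' ht' heq
  exact (hT.1 t).unique ⟨ht, by simp⟩ ⟨ht', by simp [Subgroup.mem_comap, heq]⟩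

end IsDoubleTransversal

theorem isDoubleTransversal_comap_iff (hφ : Function.Surjective φ) {T : Set G} :
    IsDoubleTransversal (L.comap φ) (M.comap φ) T ↔
      Set.InjOn φ T ∧ IsDoubleTransversal L M (φ '' T) := by
  have hiff (hinj : Set.InjOn φ T) :
      IsDoubleTransversal (L.comap φ) (M.comap φ) T ↔ IsDoubleTransversal L M (φ '' T) := by
    simp only [IsDoubleTransversal, hφ.forall, existsUnique_mem_image_iff hinj, Subgroup.mem_comap,
      map_mul, map_inv]
  exact ⟨fun hT => ⟨hT.injOn, (hiff hT.injOn).1 hT⟩, fun ⟨hinj, hU⟩ => (hiff hinj).2 hU⟩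

/-- A common transversal of the preimages of `L` and `M` amounts to its image `U`, a common
transversal of `L` and `M`, together with a set lifting `U` bijectively. -/
def doubleTransversalComapEquiv (hφ : Function.Surjective φ) (L M : Subgroup Q) :
    {T : Set G // IsDoubleTransversal (L.comap φ) (M.comap φ) T} ≃
      Σ U : {U : Set Q // IsDoubleTransversal L M U}, {T : Set G // Set.BijOn φ T U} where
  toFun T :=
    have hT := (isDoubleTransversal_comap_iff hφ).1 T.2
    ⟨⟨φ '' T, hT.2⟩, T, hT.1.bijOn_image⟩
  invFun p := ⟨p.2, (isDoubleTransversal_comap_iff hφ).2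
    ⟨p.2.2.injOn, p.2.2.image_eq.symm ▸ p.1.2⟩⟩
  left_inv _ := rfl
  right_inv := by
    rintro ⟨⟨U, hU⟩, T, hT⟩
    obtain rfl := hT.image_eq
    rfl

/-- The lifts of a common transversal `U` amount to functions `Q ⧸ L → ker φ`, once a representative
in `U` is attached to each coset of `L` and a base point is chosen in each fibre of `φ`. -/
noncomputable def liftsEquivFun (hφ : Function.Surjective φ) {U : Set Q}
    (hU : IsDoubleTransversal L M U) :
    {T : Set G // Set.BijOn φ T U} ≃ (Q ⧸ L → φ.ker) :=
  (bijOnEquivSections φ U).trans <|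
    hU.isComplement_s11.leftQuotientEquiv.symm.piCongr fun u =>
      MonoidHom.fiberEquivKerOfSurjective hφ u

theorem numDT_comap (hφ : Function.Surjective φ) (L M : Subgroup Q) [L.FiniteIndex] :
    numDT (L.comap φ) (M.comap φ) = numDT L M * Nat.card φ.ker ^ L.index := by
  have e : {T : Set G // IsDoubleTransversal (L.comap φ) (M.comap φ) T} ≃
      {U : Set Q // IsDoubleTransversal L M U} × (Q ⧸ L → φ.ker) :=
    (doubleTransversalComapEquiv hφ L M).trans <|
      (Equiv.sigmaCongrRight fun U => liftsEquivFun hφ U.2).trans (Equiv.sigmaEquivProd _ _)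
  rw [numDT, Nat.card_congr e, Nat.card_prod, Nat.card_fun, numDT, Subgroup.index]

theorem card_comap_of_surjective (hφ : Function.Surjective φ) (L : Subgroup Q) :
    Nat.card (L.comap φ) = Nat.card L * Nat.card φ.ker := by
  have hrel : φ.ker.relIndex (L.comap φ) = Nat.card L := by
    rw [← MonoidHom.comap_bot, Subgroup.relIndex_comap, Subgroup.map_comap_eq_self_of_surjective hφ,
      Subgroup.relIndex_bot_left]
  rw [← hrel, mul_comm, ← Subgroup.relIndex_bot_left, ← Subgroup.relIndex_bot_left,
    Subgroup.relIndex_mul_relIndex _ _ _ bot_le (φ.ker_le_comap L)]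

theorem transProb_comap (hφ : Function.Surjective φ) (L M : Subgroup Q) [Finite φ.ker]
    [L.FiniteIndex] : transProb (L.comap φ) (M.comap φ) = transProb L M := by
  have hker : (Nat.card φ.ker : ℚ) ≠ 0 := Nat.cast_ne_zero.2 Nat.card_pos.ne'
  rw [transProb, numDT_comap hφ, card_comap_of_surjective hφ, L.index_comap_of_surjective hφ]
  push_cast
  rw [mul_pow, mul_div_mul_right _ _ (pow_ne_zero _ hker), transProb]

end Comap

theorem comap_rangeRestrict_subgroupOf_map {G K : Type*} [Group G] [Group K] {f : G →* K}
    {H : Subgroup G} (hker : f.ker ≤ H) :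
    ((H.map f).subgroupOf f.range).comap f.rangeRestrict = H :=
  Subgroup.comap_map_eq_self hker

theorem stmt11_general {G K : Type*} [Group G] [Finite G] [Group K] (f : G →* K)
    (H₁ H₂ : Subgroup G) (hker₁ : f.ker ≤ H₁) (hker₂ : f.ker ≤ H₂) :
    transProb H₁ H₂ =
      transProb ((H₁.map f).subgroupOf f.range) ((H₂.map f).subgroupOf f.range) := by
  have : Finite f.range := Finite.of_surjective _ f.rangeRestrict_surjective
  rw [← transProb_comap f.rangeRestrict_surjective, comap_rangeRestrict_subgroupOf_map hker₁,
    comap_rangeRestrict_subgroupOf_map hker₂]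

theorem stmt11 {G K : Type*} [Group G] [Finite G] [Group K] [Finite K]
    (f : G →* K) (H : Subgroup G) (hker : f.ker ≤ H) :
    transProb H H =
      transProb ((H.map f).subgroupOf f.range) ((H.map f).subgroupOf f.range) := by
  exact stmt11_general f H H hker hker
end

section
/- Let G be a finite group with tp(G) > (1/2)^{40}. Then G is soluble or G has a section isomorphic to the alternating group A_5, i.e. there exist subgroups N ⊴ H ≤ G with H/N ≅ A_5. -/
open scoped Pointwise Classical

/-- `G` has a section isomorphic to `X`: there are subgroups `N ⊴ H ≤ G` with `H/N ≅ X`,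
equivalently (as formalized here) some subgroup of `G` admits a surjective homomorphism
onto `X`. -/
def HasSectionIsomorphicTo (G : Type*) [Group G] (X : Type*) [Group X] : Prop :=
  ∃ (H : Subgroup G) (φ : H →* X), Function.Surjective φ

/-!
For a subgroup `H`, the left transversals of `H` that are also right transversals correspond, after
fixing one common transversal, to the functions `h : G ⧸ H → H` for which `d ↦ h d • d` is
bijective. Hence `P_G(H)` is the product of `m! / m ^ m` over the `H`-orbits on `G ⧸ H`, where `m`
is the size of the orbit. It follows that `tp` does not decrease on passing to subgroups and
quotients, and a nonsolvable `G` may be replaced by a nonsolvable simple section.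

In a simple group, let `H` be generated by a central element of prime order `p` of a Sylow
`p`-subgroup, and let `c` and `n` be the order and the index of its normalizer. All orbits have size
`1` or `p`, so `2⁻⁴⁰ < tp G` gives `c * (n - 1) * (p - 1) < 40 * p ^ 2`. On the other hand `G`
embeds in the alternating group of degree `n`, so `2 * c * n ∣ n!`, and by Burnside's transfer
theorem the order is divisible by `12` or by the cube of its smallest prime factor. Taking `p`
smallest, this forces `p = 2` and leaves few orders. Sylow counting eliminates all of them but `60`,
which gives `A₅`, and `120` and `168`, which need an argument of their own.
-/

open MulAction Subgroup

section OrbitProduct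

/-- The product of `m! / m ^ m` over the `A`-orbits on `X`, where `m` is the size of the orbit: the
probability that `x ↦ h x • x` is bijective for a uniformly random `h : X → A`. The finite product
is `1` by convention if infinitely many factors differ from `1`, so `X` should be finite. -/
noncomputable def orbitProd (A X : Type*) [Group A] [MulAction A X] : ℚ :=
  ∏ᶠ ω : orbitRel.Quotient A X,
    ((Nat.card ω.orbit).factorial : ℚ) / (Nat.card ω.orbit : ℚ) ^ Nat.card ω.orbit

variable {A X : Type*} [Group A] [MulAction A X]

lemma card_smul_eq_of_mem_orbit {x y : X} (hy : y ∈ orbit A x) :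
    Nat.card {a : A // a • x = y} = Nat.card (stabilizer A x) := by
  obtain ⟨b, rfl⟩ := hy
  refine Nat.card_congr ⟨fun a => ⟨b⁻¹ * a, ?_⟩, fun a => ⟨b * a, ?_⟩, fun a => ?_, fun a => ?_⟩
  · rw [mem_stabilizer_iff, mul_smul, a.2, inv_smul_smul]
  · rw [mul_smul, a.2]
  · simp
  · simp

lemma card_perm_mem_orbit [Finite X] :
    Nat.card {σ : Equiv.Perm X // ∀ x, σ x ∈ orbit A x} =
      ∏ᶠ ω : orbitRel.Quotient A X, (Nat.card ω.orbit).factorial := by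
  have := Fintype.ofFinite X
  have := Fintype.ofFinite (orbitRel.Quotient A X)
  let π : X → orbitRel.Quotient A X := Quotient.mk''
  have hπ (σ : Equiv.Perm X) : (∀ x, σ x ∈ orbit A x) ↔ π ∘ σ = π := by
    simp only [funext_iff, Function.comp_apply, π, Quotient.eq'', orbitRel_apply]
  simp only [hπ]
  rw [Nat.card_eq_fintype_card, DomMulAct.stabilizer_card, finprod_eq_prod_of_fintype]
  refine Finset.prod_congr rfl fun ω _ => congrArg Nat.factorial ?_
  rw [← Nat.card_eq_fintype_card]
  exact Nat.card_congr (Equiv.subtypeEquivRight fun x => orbitRel.Quotient.mem_orbit.symm)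

/-- The functions `h : X → A` with `x ↦ h x • x` bijective, sorted by the permutation they induce;
the functions inducing a given permutation are then counted point by point. -/
noncomputable def bijectiveSMulEquiv : {h : X → A // Function.Bijective fun x => h x • x} ≃
    Σ σ : {σ : Equiv.Perm X // ∀ x, σ x ∈ orbit A x}, {h : X → A // ∀ x, h x • x = σ.1 x} where
  toFun h := ⟨⟨Equiv.ofBijective _ h.2, fun x => ⟨h.1 x, rfl⟩⟩, h.1, fun _ => rfl⟩
  invFun z := ⟨z.2, by simpa only [z.2.2] using z.1.1.bijective⟩
  left_inv _ := rfl
  right_inv z := Sigma.subtype_ext (Subtype.ext (Equiv.ext z.2.2)) rfl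

lemma card_bijective_smul [Finite A] [Finite X] :
    Nat.card {h : X → A // Function.Bijective fun x => h x • x} =
      (∏ᶠ ω : orbitRel.Quotient A X, (Nat.card ω.orbit).factorial) *
        ∏ᶠ x : X, Nat.card (stabilizer A x) := by
  have := Fintype.ofFinite X
  have := Fintype.ofFinite {σ : Equiv.Perm X // ∀ x, σ x ∈ orbit A x}
  have hσ (σ : {σ : Equiv.Perm X // ∀ x, σ x ∈ orbit A x}) :
      Nat.card {h : X → A // ∀ x, h x • x = σ.1 x} = ∏ x : X, Nat.card (stabilizer A x) := by
    rw [Nat.card_congr (Equiv.subtypePiEquivPi (p := fun x a => a • x = σ.1 x)), Nat.card_pi]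
    exact Fintype.prod_congr _ _ fun x => card_smul_eq_of_mem_orbit (σ.2 x)
  rw [Nat.card_congr bijectiveSMulEquiv, Nat.card_sigma]
  simp only [hσ]
  rw [Finset.sum_const, Finset.card_univ, ← Nat.card_eq_fintype_card, card_perm_mem_orbit,
    smul_eq_mul, finprod_eq_prod_of_fintype (fun x : X => Nat.card (stabilizer A x))]

lemma finprod_card_orbit [Finite X] :
    ∏ᶠ x : X, Nat.card (orbit A x) =
      ∏ᶠ ω : orbitRel.Quotient A X, Nat.card ω.orbit ^ Nat.card ω.orbit := by
  have := Fintype.ofFinite X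
  have := Fintype.ofFinite (orbitRel.Quotient A X)
  rw [finprod_eq_prod_of_fintype, finprod_eq_prod_of_fintype,
    ← Finset.prod_fiberwise Finset.univ (Quotient.mk'' : X → orbitRel.Quotient A X)]
  refine Finset.prod_congr rfl fun (ω : orbitRel.Quotient A X) _ => ?_
  have hcard :
      (Finset.univ.filter fun x : X => (Quotient.mk'' x : orbitRel.Quotient A X) = ω).card =
        Nat.card ω.orbit := by
    rw [← Set.ncard_coe_finset, Nat.card_coe_set_eq]
    congr 1
    ext x
    simp [orbitRel.Quotient.mem_orbit]
  rw [← hcard, ← Finset.prod_const]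
  refine Finset.prod_congr rfl fun x hx => ?_
  rw [hcard, ← (Finset.mem_filter.mp hx).2, orbitRel.Quotient.orbit_mk]

lemma card_bijective_smul_div [Finite A] [Finite X] :
    (Nat.card {h : X → A // Function.Bijective fun x => h x • x} : ℚ) / Nat.card A ^ Nat.card X =
      orbitProd A X := by
  have := Fintype.ofFinite X
  have := Fintype.ofFinite (orbitRel.Quotient A X)
  have horbit : (∏ᶠ x : X, Nat.card (orbit A x)) * ∏ᶠ x : X, Nat.card (stabilizer A x) =
      Nat.card A ^ Nat.card X := by
    rw [← finprod_mul_distrib (Set.toFinite _) (Set.toFinite _), finprod_eq_prod_of_fintype,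
      Nat.card_eq_fintype_card (α := X), ← Finset.card_univ, ← Finset.prod_const]
    refine Finset.prod_congr rfl fun x _ => ?_
    rw [← Nat.card_prod, Nat.card_congr (orbitProdStabilizerEquivGroup A x)]
  have hA : (Nat.card A : ℚ) ^ Nat.card X ≠ 0 := pow_ne_zero _ (by simp [Nat.card_pos.ne'])
  rw [finprod_card_orbit, finprod_eq_prod_of_fintype] at horbit
  rw [card_bijective_smul, orbitProd,
    finprod_eq_prod_of_fintype (fun ω : orbitRel.Quotient A X => _),
    finprod_eq_prod_of_fintype (fun ω : orbitRel.Quotient A X => _), Finset.prod_div_distrib]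
  rw [← Nat.cast_pow, ← horbit] at hA ⊢
  push_cast at hA ⊢
  rw [mul_div_mul_right _ _ (right_ne_zero_of_mul hA)]

end OrbitProduct

section Transversal

variable {G : Type*} [Group G] {H K : Subgroup G}

lemma forall_existsUnique_mem_range_iff {ι α β : Type*} {s : ι → α} {f : α → β}
    (hf : Function.Surjective f) (hs : Function.Injective s) :
    (∀ a, ∃! t, t ∈ Set.range s ∧ f t = f a) ↔ Function.Bijective fun i => f (s i) := by
  rw [Function.bijective_iff_existsUnique, hf.forall]
  refine forall_congr' fun a => ⟨?_, ?_⟩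
  · rintro ⟨_, ⟨⟨i, rfl⟩, hi⟩, huniq⟩
    exact ⟨i, hi, fun j hj => hs (huniq _ ⟨⟨j, rfl⟩, hj⟩)⟩
  · rintro ⟨i, hi, huniq⟩
    refine ⟨s i, ⟨⟨i, rfl⟩, hi⟩, ?_⟩
    rintro _ ⟨⟨j, rfl⟩, hj⟩
    exact congrArg s (huniq j hj)

lemma isDoubleTransversal_range_iff {ι : Type*} {s : ι → G} (hs : Function.Injective s) :
    IsDoubleTransversal H K (Set.range s) ↔
      (Function.Bijective fun i => (s i : G ⧸ H)) ∧
        Function.Bijective fun i => (((s i)⁻¹ : G) : G ⧸ K) := by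
  refine and_congr ?_ ?_
  · have hH (g t : G) : (t : G ⧸ H) = g ↔ g⁻¹ * t ∈ H := by rw [eq_comm, QuotientGroup.eq]
    simpa only [hH] using forall_existsUnique_mem_range_iff
      (QuotientGroup.mk_surjective : Function.Surjective ((↑) : G → G ⧸ H)) hs
  · have hK (g t : G) : ((t⁻¹ : G) : G ⧸ K) = (g⁻¹ : G) ↔ t * g⁻¹ ∈ K := by
      rw [QuotientGroup.eq, inv_inv]
    have hsurj : Function.Surjective fun g : G => ((g⁻¹ : G) : G ⧸ K) :=
      QuotientGroup.mk_surjective.comp inv_surjective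
    simpa only [hK] using forall_existsUnique_mem_range_iff hsurj hs

lemma IsDoubleTransversal.exists_mem_mk_eq {T : Set G} (hT : IsDoubleTransversal H K T)
    (c : G ⧸ H) : ∃ t ∈ T, (t : G ⧸ H) = c := by
  obtain ⟨g, rfl⟩ := QuotientGroup.mk_surjective c
  obtain ⟨t, ⟨ht, hgt⟩, -⟩ := hT.1 g
  exact ⟨t, ht, (QuotientGroup.eq.mpr hgt).symm⟩

lemma IsDoubleTransversal.eq_of_mk_eq {T : Set G} (hT : IsDoubleTransversal H K T) {t u : G}
    (ht : t ∈ T) (hu : u ∈ T) (h : (t : G ⧸ H) = u) : t = u :=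
  (hT.1 t).unique ⟨ht, by simp⟩ ⟨hu, QuotientGroup.eq.mp h⟩

lemma index_eq_index_of_card_eq [Finite G] (hHK : Nat.card H = Nat.card K) : H.index = K.index :=
  Nat.eq_of_mul_eq_mul_left Nat.card_pos
    (by rw [card_mul_index, hHK, card_mul_index])

/-- Hall's theorem: `H` and `K` have the same order, so a union of left cosets of `H` that contains
`m` right cosets of `K` consists of at least `m` left cosets. -/
lemma exists_bijective_mk_of_card_eq [Finite G] (hHK : Nat.card H = Nat.card K) :
    ∃ r : G ⧸ K → G, (∀ d, (((r d)⁻¹ : G) : G ⧸ K) = d) ∧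
      Function.Bijective fun d => (r d : G ⧸ H) := by
  have := Fintype.ofFinite (G ⧸ H)
  let rel (d : G ⧸ K) (c : G ⧸ H) : Prop := ∃ g : G, ((g⁻¹ : G) : G ⧸ K) = d ∧ (g : G ⧸ H) = c
  have hall (D : Finset (G ⧸ K)) :
      D.card ≤ (Finset.univ.filter fun c : G ⧸ H => ∃ d ∈ D, rel d c).card := by
    set C := Finset.univ.filter fun c : G ⧸ H => ∃ d ∈ D, rel d c
    have hDC : Nat.card ((QuotientGroup.mk : G → G ⧸ K) ⁻¹' D) ≤
        Nat.card ((QuotientGroup.mk : G → G ⧸ H) ⁻¹' C) := by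
      refine Nat.card_le_card_of_injective (fun g => ⟨g.1⁻¹, ?_⟩) fun g g' h => ?_
      · exact Finset.mem_filter.mpr ⟨Finset.mem_univ _, g.1, g.2, g.1⁻¹, by simp, rfl⟩
      · exact Subtype.ext (inv_injective (congrArg Subtype.val h))
    simp only [QuotientGroup.card_preimage_mk, hHK, SetLike.coe_sort_coe, Nat.card_eq_fintype_card,
      Fintype.card_coe] at hDC
    exact Nat.le_of_mul_le_mul_left hDC Nat.card_pos
  obtain ⟨e, he, her⟩ := (Fintype.all_card_le_filter_rel_iff_exists_injective rel).mp hall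
  choose r hrK hrH using her
  have hcard : Nat.card (G ⧸ K) = Nat.card (G ⧸ H) := (index_eq_index_of_card_eq hHK).symm
  refine ⟨r, hrK, ?_⟩
  simpa only [hrH] using (Nat.bijective_iff_injective_and_card e).mpr ⟨he, hcard⟩

/-- Once one common transversal `r` has been found, the left transversals of `H` are the sets
`{r d * (h d)⁻¹}` with `h : G ⧸ K → H` arbitrary, and `(r d * (h d)⁻¹)⁻¹ K = h d • d`. -/
lemma numDT_eq_card_bijective_smul [Finite G] (hHK : Nat.card H = Nat.card K) :
    numDT H K = Nat.card {h : G ⧸ K → H // Function.Bijective fun d => h d • d} := by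
  obtain ⟨r, hrK, hrH⟩ := exists_bijective_mk_of_card_eq hHK
  let s (h : G ⧸ K → H) (d : G ⧸ K) : G := r d * (h d : G)⁻¹
  have hsH (h d) : (s h d : G ⧸ H) = r d := QuotientGroup.eq.mpr (by simp [s])
  have hsK (h d) : (((s h d)⁻¹ : G) : G ⧸ K) = h d • d := by
    calc (((s h d)⁻¹ : G) : G ⧸ K) = h d • (((r d)⁻¹ : G) : G ⧸ K) := by
          rw [mul_inv_rev, inv_inv]
          rfl
      _ = h d • d := by rw [hrK]
  have hsH' (h) : Function.Bijective fun d => (s h d : G ⧸ H) := by simpa only [hsH] using hrH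
  have hs (h) : Function.Injective (s h) := (hsH' h).injective.of_comp
  have hiff (h) : IsDoubleTransversal H K (Set.range (s h)) ↔
      Function.Bijective fun d => h d • d := by
    rw [isDoubleTransversal_range_iff (hs h), and_iff_right (hsH' h)]
    simp only [hsK]
  refine (Nat.card_eq_of_bijective (fun h => (⟨Set.range (s h.1), (hiff h.1).mpr h.2⟩ :
    {T : Set G // IsDoubleTransversal H K T})) ⟨?_, ?_⟩).symm
  · intro h h' hhh'
    have hT : IsDoubleTransversal H K (Set.range (s h)) := (hiff h.1).mpr h.2
    refine Subtype.ext (funext fun d => Subtype.ext (inv_injective (mul_left_cancel (a := r d) ?_)))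
    refine hT.eq_of_mk_eq ⟨d, rfl⟩ ?_ ((hsH _ d).trans (hsH _ d).symm)
    rw [show Set.range (s h) = Set.range (s h') from congrArg Subtype.val hhh']
    exact ⟨d, rfl⟩
  · rintro ⟨T, hT⟩
    choose t htT ht using fun d => hT.exists_mem_mk_eq (r d : G ⧸ H)
    let h (d : G ⧸ K) : H := ⟨(t d)⁻¹ * r d, QuotientGroup.eq.mp (ht d)⟩
    have hrange : Set.range (s h) = T := by
      have hst (d : G ⧸ K) : s h d = t d := by simp [s, h]
      refine Set.Subset.antisymm (Set.range_subset_iff.mpr fun d => hst d ▸ htT d) fun u hu => ?_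
      obtain ⟨d, hd⟩ := hrH.surjective u
      exact ⟨d, hT.eq_of_mk_eq (hst d ▸ htT d) hu ((hsH h d).trans hd)⟩
    exact ⟨⟨h, (hiff h).mp (hrange ▸ hT)⟩, Subtype.ext hrange⟩

lemma transProb_eq_orbitProd [Finite G] (hHK : Nat.card H = Nat.card K) :
    transProb H K = orbitProd H (G ⧸ K) := by
  rw [transProb, numDT_eq_card_bijective_smul hHK, index_eq_index_of_card_eq hHK, Subgroup.index,
    card_bijective_smul_div]

end Transversal

section Inheritance

lemma factorial_div_pow_self_nonneg (m : ℕ) : (0 : ℚ) ≤ (m.factorial : ℚ) / (m : ℚ) ^ m := by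
  positivity

lemma factorial_div_pow_self_le_one (m : ℕ) : (m.factorial : ℚ) / (m : ℚ) ^ m ≤ 1 :=
  div_le_one_of_le₀ (by exact_mod_cast Nat.factorial_le_pow m) (by positivity)

lemma two_pow_mul_factorial_succ_le (n : ℕ) : 2 ^ n * (n + 1).factorial ≤ (n + 1) ^ (n + 1) := by
  induction n with
  | zero => simp
  | succ n ih =>
    have hbernoulli : 2 * (n + 1) ^ (n + 1) ≤ (n + 2) ^ (n + 1) := by
      have := pow_add_mul_le_add_pow (a := n + 1) (b := 1) (by simp) (by simp) (n := n + 1)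
      simp only [Nat.add_sub_cancel, mul_one] at this
      calc 2 * (n + 1) ^ (n + 1) = _ := by rw [Nat.cast_id]; ring
        _ ≤ _ := this
    calc 2 ^ (n + 1) * (n + 1 + 1).factorial
        = 2 * (n + 2) * (2 ^ n * (n + 1).factorial) := by
          rw [Nat.factorial_succ (n + 1)]; ring
      _ ≤ 2 * (n + 2) * (n + 1) ^ (n + 1) := Nat.mul_le_mul_left _ ih
      _ = (n + 2) * (2 * (n + 1) ^ (n + 1)) := by ring
      _ ≤ (n + 2) * (n + 2) ^ (n + 1) := Nat.mul_le_mul_left _ hbernoulli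
      _ = (n + 1 + 1) ^ (n + 1 + 1) := by ring

lemma factorial_div_pow_self_le (m : ℕ) :
    (m.factorial : ℚ) / (m : ℚ) ^ m ≤ (1 / 2) ^ (m - 1) := by
  cases m with
  | zero => simp
  | succ n =>
    have h : (2 : ℚ) ^ n * (n + 1).factorial ≤ ((n + 1 : ℕ) : ℚ) ^ (n + 1) := by
      exact_mod_cast two_pow_mul_factorial_succ_le n
    rw [div_le_iff₀ (by positivity), Nat.add_sub_cancel, one_div, inv_pow, inv_mul_eq_div,
      le_div_iff₀ (by positivity), mul_comm]
    exact h

/-- If an `A'`-set embeds in an `A`-set as a union of orbits, with the same orbits, then it has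
the larger orbit product, since every factor is at most `1`. -/
lemma orbitProd_le_of_injective {A X A' X' : Type*} [Group A] [MulAction A X] [Group A']
    [MulAction A' X'] [Finite X] {i : X' → X} (hi : Function.Injective i)
    (h : ∀ x, i '' orbit A' x = orbit A (i x)) : orbitProd A X ≤ orbitProd A' X' := by
  have : Finite X' := Finite.of_injective i hi
  have := Fintype.ofFinite (orbitRel.Quotient A X)
  have := Fintype.ofFinite (orbitRel.Quotient A' X')
  let j : orbitRel.Quotient A' X' → orbitRel.Quotient A X :=
    Quotient.map' i fun x y hxy => (h y).subset (Set.mem_image_of_mem i hxy)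
  have hj : Function.Injective j := by
    rintro ⟨x⟩ ⟨y⟩ hxy
    have hixy : i x ∈ orbit A (i y) := Quotient.exact' hxy
    rw [← h, hi.mem_set_image] at hixy
    exact Quotient.sound' hixy
  have hcard : ∀ ω, Nat.card (j ω).orbit = Nat.card ω.orbit := by
    rintro ⟨x⟩
    change Nat.card (orbit A (i x)) = Nat.card (orbit A' x)
    rw [← h, Nat.card_image_of_injective hi]
  rw [orbitProd, orbitProd, finprod_eq_prod_of_fintype, finprod_eq_prod_of_fintype,
    ← Finset.prod_mul_prod_compl (Finset.univ.image j), Finset.prod_image hj.injOn]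
  simp only [hcard]
  exact mul_le_of_le_one_right (Finset.prod_nonneg fun _ _ => factorial_div_pow_self_nonneg _)
    (Finset.prod_le_one (fun _ _ => factorial_div_pow_self_nonneg _)
      fun _ _ => factorial_div_pow_self_le_one _)

variable {G : Type*} [Group G] [Finite G]

lemma tp_le_orbitProd (H : Subgroup G) : tp G ≤ orbitProd H (G ⧸ H) :=
  (Finset.inf'_le _ (@Finset.mem_univ _ (_) H)).trans (transProb_eq_orbitProd rfl).le

lemma le_tp_of_forall_le_orbitProd {c : ℚ} (h : ∀ H : Subgroup G, c ≤ orbitProd H (G ⧸ H)) :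
    c ≤ tp G :=
  Finset.le_inf' _ _ fun H _ => (h H).trans (transProb_eq_orbitProd rfl).ge

lemma tp_le_tp_subgroup (K : Subgroup G) : tp G ≤ tp K := by
  refine le_tp_of_forall_le_orbitProd fun H => (tp_le_orbitProd (H.map K.subtype)).trans ?_
  let i : K ⧸ H → G ⧸ H.map K.subtype := Quotient.map' K.subtype fun a b hab => by
    rw [QuotientGroup.leftRel_apply] at hab ⊢
    exact ⟨a⁻¹ * b, hab, map_mul ..⟩
  refine orbitProd_le_of_injective (i := i) ?_ ?_
  · rintro ⟨a⟩ ⟨b⟩ hab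
    obtain ⟨c, hc, hcab⟩ := QuotientGroup.eq.mp hab
    obtain rfl : c = a⁻¹ * b := K.subtype_injective hcab
    exact QuotientGroup.eq.mpr hc
  · rintro ⟨a⟩
    ext c
    constructor
    · rintro ⟨_, ⟨h, rfl⟩, rfl⟩
      exact ⟨⟨h, h, h.2, rfl⟩, rfl⟩
    · rintro ⟨⟨_, h, hh, rfl⟩, rfl⟩
      exact ⟨_, ⟨⟨h, hh⟩, rfl⟩, rfl⟩

lemma tp_le_tp_quotient (N : Subgroup G) [N.Normal] : tp G ≤ tp (G ⧸ N) := by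
  refine le_tp_of_forall_le_orbitProd fun H =>
    (tp_le_orbitProd (H.comap (QuotientGroup.mk' N))).trans ?_
  let j : G ⧸ H.comap (QuotientGroup.mk' N) → (G ⧸ N) ⧸ H :=
    Quotient.map' (QuotientGroup.mk' N) fun a b hab => by
      rw [QuotientGroup.leftRel_apply] at hab ⊢
      exact hab
  have hj : Function.Bijective j := by
    constructor
    · rintro ⟨a⟩ ⟨b⟩ hab
      exact QuotientGroup.eq.mpr (QuotientGroup.eq.mp hab :)
    · rintro ⟨⟨g⟩⟩
      exact ⟨(g : G ⧸ _), rfl⟩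
  have himage (c) : j '' orbit (H.comap (QuotientGroup.mk' N)) c = orbit H (j c) := by
    obtain ⟨a⟩ := c
    ext d
    constructor
    · rintro ⟨_, ⟨h, rfl⟩, rfl⟩
      exact ⟨⟨(h : G), h.2⟩, rfl⟩
    · rintro ⟨⟨⟨g⟩, hg⟩, rfl⟩
      exact ⟨_, ⟨⟨g, hg⟩, rfl⟩, rfl⟩
  let e := Equiv.ofBijective j hj
  refine orbitProd_le_of_injective e.symm.injective (e.surjective.forall.mpr fun c => ?_)
  rw [e.symm_apply_apply, Equiv.image_symm_eq_preimage]
  change j ⁻¹' orbit H (j c) = _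
  rw [← himage, Set.preimage_image_eq _ hj.injective]

end Inheritance

section PrimeOrder

section

variable {A X : Type*} [Group A] [MulAction A X] [Finite X]

lemma card_orbit_eq_one_iff {x : X} : Nat.card (orbit A x) = 1 ↔ x ∈ fixedPoints A X := by
  have := Fintype.ofFinite (orbit A x)
  rw [Nat.card_eq_fintype_card, mem_fixedPoints_iff_card_orbit_eq_one]

lemma card_fixedPoints_eq_card_orbits_card_eq_one :
    Nat.card (fixedPoints A X) = Nat.card {ω : orbitRel.Quotient A X // Nat.card ω.orbit = 1} := by
  refine Nat.card_eq_of_bijective (fun x => ⟨Quotient.mk'' x.1, card_orbit_eq_one_iff.mpr x.2⟩)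
    ⟨fun x y hxy => ?_, ?_⟩
  · obtain ⟨a, ha⟩ : x.1 ∈ orbit A y.1 := Quotient.exact' (congrArg Subtype.val hxy)
    exact Subtype.ext (ha.symm.trans (y.2 a))
  · rintro ⟨⟨x⟩, hx⟩
    exact ⟨⟨x, card_orbit_eq_one_iff.mp hx⟩, rfl⟩

lemma exists_card_eq_and_orbitProd_eq_of_card_prime {p : ℕ} (hp : p.Prime) (hA : Nat.card A = p) :
    ∃ k, Nat.card X = Nat.card (fixedPoints A X) + k * p ∧
      orbitProd A X = ((p.factorial : ℚ) / (p : ℚ) ^ p) ^ k := by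
  have := Fintype.ofFinite (orbitRel.Quotient A X)
  have hcard : ∀ ω : orbitRel.Quotient A X, Nat.card ω.orbit ≠ 1 → Nat.card ω.orbit = p := by
    rintro ⟨x⟩ hx
    have hdvd : Nat.card (orbit A x) ∣ p := by
      rw [← hA, ← Nat.card_congr (orbitProdStabilizerEquivGroup A x), Nat.card_prod]
      exact dvd_mul_right _ _
    exact ((Nat.dvd_prime hp).mp hdvd).resolve_left hx
  set B := Finset.univ.filter fun ω : orbitRel.Quotient A X => Nat.card ω.orbit ≠ 1 with hB
  refine ⟨B.card, ?_, ?_⟩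
  · rw [Nat.card_congr (selfEquivSigmaOrbits' A X), Nat.card_sigma,
      card_fixedPoints_eq_card_orbits_card_eq_one, Nat.card_eq_fintype_card, Fintype.card_subtype,
      ← Finset.sum_filter_add_sum_filter_not _ fun ω : orbitRel.Quotient A X =>
        Nat.card ω.orbit = 1,
      Finset.card_eq_sum_ones, ← smul_eq_mul, ← Finset.sum_const]
    exact congrArg₂ _ (Finset.sum_congr rfl fun ω hω => (Finset.mem_filter.mp hω).2)
      (Finset.sum_congr rfl fun ω hω => hcard ω (Finset.mem_filter.mp hω).2)
  · rw [orbitProd, finprod_eq_prod_of_fintype, ← Finset.prod_const,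
      ← Finset.prod_subset B.subset_univ fun ω _ hω => ?_]
    · exact Finset.prod_congr rfl fun ω hω => by rw [hcard ω (Finset.mem_filter.mp hω).2]
    · have : Nat.card ω.orbit = 1 := by simpa [hB] using hω
      simp [this]

end

variable {G : Type*} [Group G] [Finite G] {H : Subgroup G} {p : ℕ}

lemma card_fixedPoints_quotient_mul_card :
    Nat.card (fixedPoints H (G ⧸ H)) * Nat.card H = Nat.card (normalizer (H : Set G)) := by
  rw [Nat.card_congr (Sylow.fixedPointsMulLeftCosetsEquivQuotient H),
    ← Nat.card_congr (subgroupOfEquivOfLe H.le_normalizer).toEquiv]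
  exact (card_eq_card_quotient_mul_card_subgroup _).symm

lemma exists_card_eq_and_tp_le_of_card_prime (hp : p.Prime) (hH : Nat.card H = p) :
    ∃ k, Nat.card G = Nat.card (normalizer (H : Set G)) + k * p ^ 2 ∧
      tp G ≤ (1 / 2) ^ (k * (p - 1)) := by
  obtain ⟨k, hcard, hprod⟩ :=
    exists_card_eq_and_orbitProd_eq_of_card_prime (X := G ⧸ H) hp hH
  refine ⟨k, ?_, ?_⟩
  · rw [card_eq_card_quotient_mul_card_subgroup H, hcard,
      ← card_fixedPoints_quotient_mul_card, hH]
    ring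
  · calc tp G ≤ _ := tp_le_orbitProd H
      _ = _ := hprod
      _ ≤ ((1 / 2) ^ (p - 1)) ^ k :=
        pow_le_pow_left₀ (factorial_div_pow_self_nonneg p) (factorial_div_pow_self_le p) k
      _ = _ := by rw [← pow_mul, mul_comm]

lemma exists_card_normalizer_mul_index_sub_one_eq {m : ℕ} (htp : (1 / 2) ^ m < tp G) (hp : p.Prime)
    (hH : Nat.card H = p) :
    ∃ k, Nat.card (normalizer (H : Set G)) * ((normalizer (H : Set G)).index - 1) = k * p ^ 2 ∧
      k * (p - 1) < m := by
  obtain ⟨k, hcard, hk⟩ := exists_card_eq_and_tp_le_of_card_prime hp hH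
  refine ⟨k, ?_, ?_⟩
  · rw [Nat.mul_sub_one, card_mul_index, hcard, Nat.add_sub_cancel_left]
  · exact (pow_lt_pow_iff_right_of_lt_one₀ (by norm_num) (by norm_num)).mp (htp.trans_le hk)

end PrimeOrder

section CoprimeIndex

variable {G : Type*} [Group G] [Finite G] {H K F : Subgroup G}

lemma exists_mul_eq_of_coprime_index (h : H.index.Coprime K.index) (g : G) :
    ∃ a ∈ H, ∃ b ∈ K, a * b = g := by
  have hrel : K.index ∣ K.relIndex H := by
    have hmul : (K ⊓ H).index = K.relIndex H * H.index := by
      rw [← inf_relIndex_right, relIndex_mul_index inf_le_right]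
    exact h.symm.dvd_of_dvd_mul_right (hmul ▸ index_dvd_of_le inf_le_left)
  have hstab : stabilizer H ((1 : G) : G ⧸ K) = K.subgroupOf H := by
    ext a
    change (a : G) • ((1 : G) : G ⧸ K) = _ ↔ _
    rw [← mem_stabilizer_iff, stabilizer_quotient, mem_subgroupOf]
  have horbit : orbit H ((1 : G) : G ⧸ K) = Set.univ := by
    refine Set.eq_of_subset_of_ncard_le (Set.subset_univ _) ?_
    rw [← index_stabilizer, hstab, Set.ncard_univ]
    exact Nat.le_of_dvd (Nat.pos_of_ne_zero index_ne_zero_of_finite) hrel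
  obtain ⟨a, ha⟩ := horbit ▸ Set.mem_univ (g : G ⧸ K)
  have hag : (((a : G) * 1 : G) : G ⧸ K) = g := ha
  exact ⟨a, a.2, (a : G)⁻¹ * g, by simpa using QuotientGroup.eq.mp hag, mul_inv_cancel_left _ _⟩

lemma le_normalCore_of_coprime_index (hHF : H ≤ F)
    (h : F.index.Coprime (normalizer (H : Set G)).index) : H ≤ F.normalCore := by
  intro x hx g
  obtain ⟨a, ha, b, hb, rfl⟩ := exists_mul_eq_of_coprime_index h g
  have hbx : b * x * b⁻¹ ∈ F := hHF ((mem_normalizer_iff.mp hb x).mp hx)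
  simpa [mul_assoc] using F.mul_mem (F.mul_mem ha hbx) (F.inv_mem ha)

end CoprimeIndex

section Prime

variable {G : Type*} [Group G] {p : ℕ}

lemma exists_sylow_coe_eq_zpowers [Fact p.Prime] {x : G} (hx : orderOf x = p)
    (hpG : ¬ p ^ 2 ∣ Nat.card G) : ∃ P : Sylow p G, (P : Subgroup G) = zpowers x := by
  have hcard : Nat.card (zpowers x) = p := (Nat.card_zpowers x).trans hx
  have hindex : ¬ p ∣ (zpowers x).index := fun h =>
    hpG (by rw [← card_mul_index (zpowers x), hcard, sq]; exact Nat.mul_dvd_mul_left p h)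
  exact ⟨(IsPGroup.of_card (hcard.trans (pow_one p).symm)).toSylow hindex, rfl⟩

variable [Finite G]

lemma exists_card_eq_and_not_dvd_index_normalizer (hp : p.Prime) (hpG : p ∣ Nat.card G) :
    ∃ H : Subgroup G, Nat.card H = p ∧ ¬ p ∣ (normalizer (H : Set G)).index := by
  have : Fact p.Prime := ⟨hp⟩
  obtain ⟨P⟩ : Nonempty (Sylow p G) := inferInstance
  have : Nontrivial P := (nontrivial_iff_ne_bot _).mpr (P.ne_bot_of_dvd_card hpG)
  obtain ⟨n, hn, hcard⟩ :=
    (P.2.to_subgroup (center P)).nontrivial_iff_card.mp P.2.center_nontrivial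
  obtain ⟨z, hz⟩ := exists_prime_orderOf_dvd_card' p (hcard ▸ dvd_pow_self p hn.ne')
  have hle : (P : Subgroup G) ≤ normalizer (zpowers (z : G) : Set G) := by
    refine le_trans (fun x hx => ?_) (centralizer_le_normalizer _)
    rintro _ ⟨k, rfl⟩
    have hcomm : Commute x (z : G) := congrArg Subtype.val (mem_center_iff.mp z.2 ⟨x, hx⟩)
    exact (hcomm.zpow_right k).symm.eq
  refine ⟨zpowers (z : G), by rw [Nat.card_zpowers, orderOf_coe, orderOf_coe, hz], fun h => ?_⟩
  exact P.not_dvd_index (h.trans (index_dvd_of_le hle))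

lemma exists_commute_of_card_eq_two {H : Subgroup G} (hH : Nat.card H = 2) {q : ℕ} (hq : q.Prime)
    (hqN : q ∣ Nat.card (normalizer (H : Set G))) :
    ∃ t u : G, orderOf t = 2 ∧ orderOf u = q ∧ Commute t u := by
  have : Fact q.Prime := ⟨hq⟩
  obtain ⟨t, ht, huniq⟩ := (Nat.card_eq_two_iff' (1 : H)).mp hH
  obtain ⟨u, hu⟩ := exists_prime_orderOf_dvd_card' q hqN
  refine ⟨t, u, ?_, by rw [orderOf_coe, hu], ?_⟩
  · rw [orderOf_coe]
    have := orderOf_dvd_natCard t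
    exact ((Nat.dvd_prime Nat.prime_two).mp (hH ▸ this)).resolve_left (mt orderOf_eq_one_iff.mp ht)
  · have hconj : (u : G) * t * (u : G)⁻¹ ∈ H := (mem_normalizer_iff.mp u.2 t).mp t.2
    have heq : (u : G) * t * (u : G)⁻¹ = t := congrArg Subtype.val <| huniq ⟨_, hconj⟩ fun h =>
      ht (Subtype.ext (conj_eq_one_iff.mp (congrArg Subtype.val h)))
    exact (mul_inv_eq_iff_eq_mul.mp heq).symm

lemma exists_dvd_pow_sub_one_of_orderOf_mulAut [Fact p.Prime] {a q : ℕ} (hG : Nat.card G = p ^ a)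
    (hq : q.Prime) (hqp : q ≠ p) {x : MulAut G} (hx : orderOf x = q) :
    ∃ i, i ≠ 0 ∧ i ≤ a ∧ q ∣ p ^ i - 1 := by
  have hp : p.Prime := Fact.out
  have : Fact q.Prime := ⟨hq⟩
  have hX : IsPGroup q (zpowers x) :=
    IsPGroup.of_card (n := 1) (by rw [Nat.card_zpowers, hx, pow_one])
  obtain ⟨j, hja, hj⟩ := (Nat.dvd_prime_pow hp).mp
    (hG ▸ card_subgroup_dvd_card (FixedPoints.subgroup (zpowers x) G))
  have hlt : j ≠ a := by
    rintro rfl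
    have htop := eq_top_of_card_eq _ (hj.trans hG.symm)
    have hx1 : x = 1 := by
      ext g
      exact (htop ▸ mem_top g : g ∈ FixedPoints.subgroup (zpowers x) G) ⟨x, mem_zpowers x⟩
    rw [hx1, orderOf_one] at hx
    exact hq.one_lt.ne hx
  have hmod : p ^ j ≡ p ^ a [MOD q] := by
    rw [← hj, ← hG]
    exact (hX.card_modEq_card_fixedPoints G).symm
  refine ⟨a - j, by omega, by omega, ?_⟩
  have hdvd := (Nat.modEq_iff_dvd' (Nat.pow_le_pow_right hp.pos hja)).mp hmod
  rw [← Nat.sub_add_cancel hja, pow_add, ← Nat.sub_one_mul] at hdvd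
  exact (((Nat.coprime_primes hq hp).mpr hqp).pow_right j).dvd_of_dvd_mul_right hdvd

lemma isMulCommutative_of_card_eq_prime_pow {A : Type*} [Group A] [Fact p.Prime] {a : ℕ}
    (ha : a ≤ 2) (hA : Nat.card A = p ^ a) : IsMulCommutative A := by
  interval_cases a
  · have := (Nat.card_eq_one_iff_unique.mp hA).1
    infer_instance
  · have := isCyclic_of_prime_card (hA.trans (pow_one p))
    infer_instance
  · exact IsPGroup.isMulCommutative_of_card_eq_prime_sq hA

lemma eq_two_of_dvd_pow_sub_one {q i : ℕ} (hp : p.Prime) (hq : q.Prime) (hpq : p < q)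
    (hi : i ≠ 0) (hi2 : i ≤ 2) (hdvd : q ∣ p ^ i - 1) : p = 2 ∧ q = 3 ∧ i = 2 := by
  have hnot : ¬ q ∣ p - 1 :=
    Nat.not_dvd_of_pos_of_lt (Nat.sub_pos_of_lt hp.one_lt) ((Nat.sub_le p 1).trans_lt hpq)
  obtain rfl : i = 2 := by
    have : i ≠ 1 := by
      rintro rfl
      exact hnot (by rwa [pow_one] at hdvd)
    omega
  rw [show p ^ 2 - 1 = (p + 1) * (p - 1) from Nat.sq_sub_sq p 1] at hdvd
  have hle := Nat.le_of_dvd p.succ_pos ((hq.dvd_mul.mp hdvd).resolve_right hnot)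
  obtain rfl : q = p + 1 := le_antisymm hle hpq
  have hp2 : p = 2 := by
    refine hp.eq_two_or_odd'.resolve_right fun hodd => ?_
    have := (Nat.prime_dvd_prime_iff_eq Nat.prime_two hq).mp hodd.add_one.two_dvd
    exact hp.ne_one (by omega)
  exact ⟨hp2, by rw [hp2], rfl⟩

end Prime

section SimpleGroup

variable {G : Type*} [Group G] [IsSimpleGroup G]

lemma eq_one_of_not_isSolvable (hns : ¬ Group.IsSolvable G) {A : Type*} [Group A]
    [Group.IsSolvable A] (f : G →* A) : f = 1 :=
  f.ker_eq_top_iff.mp <| f.normal_ker.eq_bot_or_eq_top.resolve_left fun h =>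
    hns (Group.isSolvable_of_isSolvable_injective (f.ker_eq_bot_iff.mp h))

lemma normalCore_eq_bot {H : Subgroup G} (hH : H ≠ ⊤) : H.normalCore = ⊥ :=
  H.normalCore_normal.eq_bot_or_eq_top.resolve_right fun h =>
    hH (top_le_iff.mp (h ▸ H.normalCore_le))

variable [Finite G]

lemma exists_injective_alternatingGroup (hns : ¬ Group.IsSolvable G) {H : Subgroup G} {n : ℕ}
    (hH : H.index = n) (hn : n ≠ 1) :
    ∃ f : G →* alternatingGroup (Fin n), Function.Injective f := by
  have := Fintype.ofFinite (G ⧸ H)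
  let f := toPermHom G (G ⧸ H)
  have hf : Function.Injective f := by
    rw [← MonoidHom.ker_eq_bot_iff, ← normalCore_eq_ker, normalCore_eq_bot]
    rwa [ne_eq, ← index_eq_one, hH]
  have hsign (g : G) : f g ∈ alternatingGroup (G ⧸ H) :=
    DFunLike.congr_fun (eq_one_of_not_isSolvable hns (Equiv.Perm.sign.comp f)) g
  let e : G ⧸ H ≃ Fin n := Fintype.equivFinOfCardEq (Nat.card_eq_fintype_card.symm.trans hH)
  exact ⟨(Equiv.altCongrHom e).toMonoidHom.comp (f.codRestrict _ hsign),
    (Equiv.altCongrHom e).injective.comp fun a b hab => hf (congrArg Subtype.val hab)⟩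

lemma two_mul_card_dvd_factorial_index (hns : ¬ Group.IsSolvable G) {H : Subgroup G}
    (hH : H ≠ ⊤) : 2 * Nat.card G ∣ H.index.factorial := by
  obtain ⟨f, hf⟩ := exists_injective_alternatingGroup hns rfl (mt index_eq_one.mp hH)
  have : Nontrivial (Fin H.index) := Fin.nontrivial_iff_two_le.mpr (one_lt_index_of_ne_top hH)
  have hcard : 2 * Nat.card (alternatingGroup (Fin H.index)) = H.index.factorial := by
    rw [two_mul_nat_card_alternatingGroup, Nat.card_perm, Nat.card_fin]
  exact hcard ▸ Nat.mul_dvd_mul_left 2 (card_dvd_of_injective f hf)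

lemma normalizer_ne_top_of_isPGroup (hns : ¬ Group.IsSolvable G) {p : ℕ} [Fact p.Prime]
    {H : Subgroup G} (hH : IsPGroup p H) (hbot : H ≠ ⊥) : normalizer (H : Set G) ≠ ⊤ := by
  intro htop
  obtain rfl := (normalizer_eq_top_iff.mp htop).eq_bot_or_eq_top.resolve_left hbot
  have := (hH.of_equiv topEquiv).isNilpotent
  exact hns IsNilpotent.to_isSolvable

section Sylow

variable {p : ℕ} [Fact p.Prime] (P : Sylow p G)

/-- Burnside: otherwise the transfer `G →* P` would be trivial, while its kernel meets `P`
trivially. -/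
lemma not_normalizer_le_centralizer (hns : ¬ Group.IsSolvable G) (hpG : p ∣ Nat.card G) :
    ¬ normalizer (P : Set G) ≤ centralizer (P : Set G) := by
  intro h
  have := P.2.isNilpotent
  have : Group.IsSolvable P := IsNilpotent.to_isSolvable
  have hcompl := MonoidHom.ker_transferSylow_isComplement' P h
  rw [MonoidHom.ker_eq_top_iff.mpr (eq_one_of_not_isSolvable hns _), isComplement'_top_left]
    at hcompl
  exact P.ne_bot_of_dvd_card hpG hcompl

lemma exists_prime_dvd_pow_sub_one [IsMulCommutative P] (hns : ¬ Group.IsSolvable G)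
    (hpG : p ∣ Nat.card G) :
    ∃ q i, q.Prime ∧ q ≠ p ∧ q ∣ Nat.card G ∧ i ≠ 0 ∧ p ^ i ∣ Nat.card P ∧ q ∣ p ^ i - 1 := by
  let f := (P : Subgroup G).normalizerMonoidHom
  have hrange : Nat.card f.range =
      (centralizer (P : Set G)).relIndex (normalizer (P : Set G)) := by
    rw [← index_ker, normalizerMonoidHom_ker]
    rfl
  have hne : Nat.card f.range ≠ 1 := fun h =>
    not_normalizer_le_centralizer P hns hpG (relIndex_eq_one.mp (hrange ▸ h))
  obtain ⟨q, hq, hqf⟩ := Nat.exists_prime_and_dvd hne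
  have : Fact q.Prime := ⟨hq⟩
  obtain ⟨⟨x, hxf⟩, hx⟩ := exists_prime_orderOf_dvd_card' q hqf
  have hqp : q ≠ p := by
    rintro rfl
    exact P.not_dvd_index <| hqf.trans <| hrange ▸
      (relIndex_dvd_of_le_left _ P.le_centralizer).trans (relIndex_dvd_index_of_le P.le_normalizer)
  have hqG : q ∣ Nat.card G := (hqf.trans (card_range_dvd f)).trans (card_subgroup_dvd_card _)
  obtain ⟨a, ha⟩ := P.2.exists_card_eq
  obtain ⟨i, hi, hia, hdvd⟩ :=
    exists_dvd_pow_sub_one_of_orderOf_mulAut ha hq hqp ((orderOf_mk x hxf).symm.trans hx)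
  exact ⟨q, i, hq, hqp, hqG, hi, ha ▸ pow_dvd_pow p hia, hdvd⟩

lemma index_normalizer_ne_index [IsMulCommutative P] (hns : ¬ Group.IsSolvable G)
    (hpG : p ∣ Nat.card G) : (normalizer (P : Set G)).index ≠ (P : Subgroup G).index := by
  intro h
  have hrel : (P : Subgroup G).relIndex (normalizer (P : Set G)) *
      (normalizer (P : Set G)).index = (P : Subgroup G).index := relIndex_mul_index P.le_normalizer
  rw [← h, Nat.mul_eq_right index_ne_zero_of_finite, relIndex_eq_one] at hrel
  exact not_normalizer_le_centralizer P hns hpG (hrel.trans P.le_centralizer)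

/-- The conceivable numbers `d` of Sylow `p`-subgroups in a nonsolvable simple group of order
`p ^ a * m`, where `p ∤ m`. If `d = m`, the Sylow subgroups are their own normalizers, hence not
abelian by Burnside's theorem. -/
def sylowNumbers (p a m : ℕ) : Finset ℕ :=
  m.divisors.filter fun d =>
    d % p = 1 ∧ 2 * (p ^ a * m) ∣ d.factorial ∧ (d = m → 2 < a)

lemma index_normalizer_mem_sylowNumbers (hns : ¬ Group.IsSolvable G) {a m : ℕ} (ha : a ≠ 0)
    (hpm : ¬ p ∣ m) (hG : Nat.card G = p ^ a * m) :
    (normalizer (P : Set G)).index ∈ sylowNumbers p a m := by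
  have hp : p.Prime := Fact.out
  have hm : m ≠ 0 := by
    rintro rfl
    exact hpm (dvd_zero p)
  have hpG : p ∣ Nat.card G := hG ▸ (dvd_pow_self p ha).mul_right m
  have hP : Nat.card P = p ^ a := by
    rw [P.card_eq_multiplicity, hG, Nat.factorization_mul (pow_ne_zero _ hp.ne_zero) hm,
      Finsupp.add_apply, hp.factorization_pow, Finsupp.single_eq_same,
      Nat.factorization_eq_zero_of_not_dvd hpm, add_zero]
  have hindex : (P : Subgroup G).index = m :=
    Nat.eq_of_mul_eq_mul_left (pow_pos hp.pos a) (by rw [← hP, card_mul_index, hG, hP])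
  have hne := normalizer_ne_top_of_isPGroup hns P.2 (P.ne_bot_of_dvd_card hpG)
  refine Finset.mem_filter.mpr ⟨Nat.mem_divisors.mpr ⟨?_, hm⟩, ?_, ?_, fun h => ?_⟩
  · exact hindex ▸ index_dvd_of_le P.le_normalizer
  · rw [← P.card_eq_index_normalizer, card_sylow_modEq_one p G, Nat.mod_eq_of_lt hp.one_lt]
  · exact hG ▸ two_mul_card_dvd_factorial_index hns hne
  · by_contra! ha2
    have := isMulCommutative_of_card_eq_prime_pow ha2 hP
    exact index_normalizer_ne_index P hns hpG (h.trans hindex.symm)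

end Sylow

lemma card_ne_of_sylowNumbers_eq_empty (hns : ¬ Group.IsSolvable G) {p a m : ℕ} (hp : p.Prime)
    (ha : a ≠ 0) (hpm : ¬ p ∣ m) (h : sylowNumbers p a m = ∅) : Nat.card G ≠ p ^ a * m := by
  intro hG
  have : Fact p.Prime := ⟨hp⟩
  obtain ⟨P⟩ : Nonempty (Sylow p G) := inferInstance
  exact Finset.notMem_empty _ (h ▸ index_normalizer_mem_sylowNumbers P hns ha hpm hG)

lemma minFac_pow_three_dvd_card_or_twelve_dvd_card (hns : ¬ Group.IsSolvable G) :
    (Nat.card G).minFac ^ 3 ∣ Nat.card G ∨ 12 ∣ Nat.card G := by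
  set p := (Nat.card G).minFac
  have hp : p.Prime := Nat.minFac_prime Finite.one_lt_card.ne'
  have : Fact p.Prime := ⟨hp⟩
  obtain ⟨P⟩ : Nonempty (Sylow p G) := inferInstance
  obtain ⟨a, ha⟩ := P.2.exists_card_eq
  refine or_iff_not_imp_left.mpr fun hp3 => ?_
  have ha2 : a ≤ 2 := by
    by_contra! ha3
    exact hp3 ((pow_dvd_pow p ha3).trans (ha ▸ card_subgroup_dvd_card _))
  have := isMulCommutative_of_card_eq_prime_pow ha2 ha
  obtain ⟨q, i, hq, hqp, hqG, hi, hiP, hdvd⟩ :=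
    exists_prime_dvd_pow_sub_one P hns (Nat.minFac_dvd _)
  have hpq : p < q := lt_of_le_of_ne (Nat.minFac_le_of_dvd hq.two_le hqG) hqp.symm
  have hia : i ≤ a := (Nat.pow_dvd_pow_iff_le_right hp.one_lt).mp (ha ▸ hiP)
  obtain ⟨hp2, rfl, rfl⟩ := eq_two_of_dvd_pow_sub_one hp hq hpq hi (hia.trans ha2) hdvd
  have hp2G : p ^ 2 ∣ Nat.card G := hiP.trans (card_subgroup_dvd_card _)
  rw [hp2] at hp2G
  exact Nat.Coprime.mul_dvd_of_dvd_of_dvd (m := 2 ^ 2) (n := 3) (by norm_num) hp2G hqG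

/-- Some orders excluded for a nonsolvable simple group by counting its Sylow subgroups for a single
prime: all those that `2⁻⁴⁰ < tp G` leaves open, except for `60`, `120` and `168`. -/
def sylowExcludedOrders : Finset ℕ := {36, 56, 72, 84, 88, 104, 108, 132, 136, 144, 152, 156}

lemma card_notMem_sylowExcludedOrders (hns : ¬ Group.IsSolvable G) :
    Nat.card G ∉ sylowExcludedOrders := by
  have h (p a m : ℕ) (hpam : p.Prime ∧ a ≠ 0 ∧ ¬ p ∣ m ∧ sylowNumbers p a m = ∅) :
      Nat.card G ≠ p ^ a * m :=
    card_ne_of_sylowNumbers_eq_empty hns hpam.1 hpam.2.1 hpam.2.2.1 hpam.2.2.2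
  simp only [sylowExcludedOrders, Finset.mem_insert, Finset.mem_singleton, not_or]
  refine ⟨h 3 2 4 ?_, h 7 1 8 ?_, h 3 2 8 ?_, h 7 1 12 ?_, h 11 1 8 ?_, h 13 1 8 ?_, h 3 3 4 ?_,
    h 11 1 12 ?_, h 17 1 8 ?_, h 3 2 16 ?_, h 19 1 8 ?_, h 13 1 12 ?_⟩ <;> decide +kernel

lemma exists_surjective_alternatingGroup_of_card_eq_60 (hns : ¬ Group.IsSolvable G)
    (hG : Nat.card G = 60) : ∃ f : G →* alternatingGroup (Fin 5), Function.Surjective f := by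
  have : Fact (Nat.Prime 2) := ⟨Nat.prime_two⟩
  obtain ⟨P⟩ : Nonempty (Sylow 2 G) := inferInstance
  have hindex : (normalizer (P : Set G)).index = 5 := by
    have h := index_normalizer_mem_sylowNumbers P hns (a := 2) (m := 15) (by simp) (by decide) hG
    rwa [show sylowNumbers 2 2 15 = {5} by decide +kernel, Finset.mem_singleton] at h
  obtain ⟨f, hf⟩ := exists_injective_alternatingGroup hns hindex (by simp)
  refine ⟨f, ((Nat.bijective_iff_injective_and_card f).mpr ⟨hf, ?_⟩).surjective⟩
  rw [hG, nat_card_alternatingGroup, Nat.card_fin]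
  rfl

/-- The six Sylow `5`-subgroups would embed `G` in `A₆` as a subgroup of index three, which is
impossible because `A₆` is simple of order larger than `3!`. -/
lemma card_ne_120 (hns : ¬ Group.IsSolvable G) : Nat.card G ≠ 120 := by
  intro hG
  have : Fact (Nat.Prime 5) := ⟨Nat.prime_five⟩
  obtain ⟨P⟩ : Nonempty (Sylow 5 G) := inferInstance
  have hindex : (normalizer (P : Set G)).index = 6 := by
    have h := index_normalizer_mem_sylowNumbers P hns (a := 1) (m := 24) (by simp) (by decide) hG
    rwa [show sylowNumbers 5 1 24 = {6} by decide +kernel, Finset.mem_singleton] at h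
  obtain ⟨f, hf⟩ := exists_injective_alternatingGroup hns hindex (by simp)
  have hA : Nat.card (alternatingGroup (Fin 6)) = 360 := by
    rw [nat_card_alternatingGroup, Nat.card_fin]
    rfl
  have : IsSimpleGroup (alternatingGroup (Fin 6)) := alternatingGroup.isSimpleGroup (by simp)
  have hAns : ¬ Group.IsSolvable (alternatingGroup (Fin 6)) := fun h =>
    hns (Group.isSolvable_of_isSolvable_injective hf)
  have hrange : f.range.index = 3 := by
    have hcard : Nat.card f.range = 120 :=
      hG ▸ (Nat.card_congr (MonoidHom.ofInjective hf).toEquiv).symm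
    have := f.range.card_mul_index
    rw [hcard, hA] at this
    omega
  have hdvd := two_mul_card_dvd_factorial_index hAns (H := f.range) fun h => by simp [h] at hrange
  rw [hA, hrange] at hdvd
  exact absurd hdvd (by decide)

/-- Seven Sylow `3`-subgroups are impossible: the normalizer of a Sylow `7`-subgroup has index `8`
and contains a Sylow `3`-subgroup `Q`. Together with the normalizer of `Q` it would factorize `G`,
so it would contain every conjugate of `Q`. -/
lemma index_normalizer_sylow_three_of_card_eq_168 (hns : ¬ Group.IsSolvable G)
    (hG : Nat.card G = 168) [Fact (Nat.Prime 3)] (P : Sylow 3 G) :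
    (normalizer (P : Set G)).index = 28 := by
  have : Fact (Nat.Prime 7) := ⟨Nat.prime_seven⟩
  obtain ⟨R⟩ : Nonempty (Sylow 7 G) := inferInstance
  set F := normalizer (R : Set G)
  have hF : F.index = 8 := by
    have h := index_normalizer_mem_sylowNumbers R hns (a := 1) (m := 24) (by simp) (by decide) hG
    rwa [show sylowNumbers 7 1 24 = {8} by decide +kernel, Finset.mem_singleton] at h
  have hP : (normalizer (P : Set G)).index = 7 ∨ (normalizer (P : Set G)).index = 28 := by
    have h := index_normalizer_mem_sylowNumbers P hns (a := 1) (m := 56) (by simp) (by decide) hG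
    rwa [show sylowNumbers 3 1 56 = {7, 28} by decide +kernel, Finset.mem_insert,
      Finset.mem_singleton] at h
  refine hP.resolve_left fun h7 => ?_
  have hFcard : Nat.card F = 21 := by
    have := F.card_mul_index
    rw [hF, hG] at this
    omega
  obtain ⟨z, hz⟩ := exists_prime_orderOf_dvd_card' (G := F) 3 (by rw [hFcard]; decide)
  rw [← orderOf_coe] at hz
  obtain ⟨Q, hQ⟩ := exists_sylow_coe_eq_zpowers hz (by rw [hG]; decide)
  have hcoprime : F.index.Coprime (normalizer (zpowers (z : G) : Set G)).index := by
    rw [← hQ, hF, show (normalizer ((Q : Subgroup G) : Set G)).index = 7 from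
      Q.card_eq_index_normalizer.symm.trans (P.card_eq_index_normalizer.trans h7)]
    decide
  have hbot := le_normalCore_of_coprime_index ((zpowers_le).mpr z.2) hcoprime
  rw [normalCore_eq_bot fun h => by simp [h] at hF, le_bot_iff, zpowers_eq_bot] at hbot
  simp [hbot] at hz

/-- Otherwise `t` and `u` generate the normalizer of `⟨u⟩`, a Sylow `3`-subgroup with `28`
conjugates, against Burnside's theorem. -/
lemma not_commute_of_card_eq_168 (hns : ¬ Group.IsSolvable G) (hG : Nat.card G = 168) {t u : G}
    (ht : orderOf t = 2) (hu : orderOf u = 3) : ¬ Commute t u := by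
  intro htu
  have : Fact (Nat.Prime 3) := ⟨Nat.prime_three⟩
  obtain ⟨P, hP⟩ := exists_sylow_coe_eq_zpowers hu (by rw [hG]; decide)
  refine not_normalizer_le_centralizer P hns (by rw [hG]; decide) ?_
  have hN : Nat.card (normalizer (P : Set G)) = 6 := by
    have := (normalizer (P : Set G)).card_mul_index
    rw [index_normalizer_sylow_three_of_card_eq_168 hns hG P] at this
    omega
  have hmem {x : G} (hx : Commute x u) : x ∈ centralizer (P : Set G) := by
    change x ∈ centralizer ((P : Subgroup G) : Set G)
    rw [hP]
    rintro _ ⟨k, rfl⟩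
    exact (hx.zpow_right k).symm.eq
  have hC : 6 ∣ Nat.card (centralizer (P : Set G)) := by
    have h2 := Subgroup.orderOf_dvd_natCard _ (hmem htu)
    have h3 := Subgroup.orderOf_dvd_natCard _ (hmem (Commute.refl u))
    rw [ht] at h2
    rw [hu] at h3
    omega
  exact (eq_of_le_of_card_ge (centralizer_le_normalizer _)
    (hN ▸ Nat.le_of_dvd Nat.card_pos hC)).ge

end SimpleGroup

section Numerics

lemma forty_le_mul_sub_one_of_three_le {p c n k : ℕ} (hp3 : 3 ≤ p) (hpn : p < n)
    (hc : p ^ 3 ∣ c) (hc0 : 0 < c) (hfac : c ∣ n.factorial) (hk : c * (n - 1) = k * p ^ 2) :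
    40 ≤ k * (p - 1) := by
  obtain ⟨b, rfl⟩ := hc
  have hb : 0 < b := Nat.pos_of_mul_pos_left hc0
  obtain rfl : k = p * (b * (n - 1)) :=
    Nat.eq_of_mul_eq_mul_right (pow_pos (by omega : 0 < p) 2) (by rw [← hk]; ring)
  by_contra! hlt
  have hn : p * ((n - 1) * (p - 1)) ≤ p * (b * (n - 1)) * (p - 1) := by
    calc p * ((n - 1) * (p - 1)) = p * (1 * (n - 1)) * (p - 1) := by ring
      _ ≤ _ := by gcongr; omega
  have hp4 : p < 4 := by
    by_contra! h
    have : 4 * (4 * 3) ≤ p * ((n - 1) * (p - 1)) := by gcongr <;> omega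
    omega
  obtain rfl : p = 3 := by omega
  have hn7 : n ≤ 7 := by omega
  have h27 : 3 ^ 3 ∣ n.factorial := (dvd_mul_right _ b).trans hfac
  interval_cases n <;> revert h27 <;> decide

lemma mul_mem_sylowExcludedOrders_or_of_mul_sub_one_lt {c n : ℕ} (hn : n % 2 = 1)
    (hn1 : n ≠ 1) (hc0 : 0 < c) (hdvd : 8 ∣ c * n ∨ 12 ∣ c * n)
    (hfac : 2 * (c * n) ∣ n.factorial) (hlt : c * (n - 1) < 160) :
    c * n ∈ sylowExcludedOrders ∨ c * n = 60 ∨ c * n = 120 ∨ c = 24 ∧ n = 7 := by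
  have hcoprime : Nat.Coprime 4 n := (Nat.coprime_two_left.mpr (Nat.odd_iff.mpr hn)).pow_left 2
  obtain ⟨b, rfl⟩ : 4 ∣ c := hcoprime.dvd_of_dvd_mul_right <|
    hdvd.elim (dvd_trans (by decide)) (dvd_trans (by decide))
  have hlt' : b * (n - 1) < 40 := by linarith
  have hb : b < 40 := by nlinarith [show 1 ≤ n - 1 by omega]
  have hn40 : n < 41 := by nlinarith [show 1 ≤ b by omega, show n - 1 + 1 = n by omega]
  have hcheck : ∀ x ∈ (Finset.range 40 ×ˢ Finset.range 41).filter fun x =>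
      x.2 % 2 = 1 ∧ x.2 ≠ 1 ∧ x.1 * (x.2 - 1) < 40 ∧ (8 ∣ 4 * x.1 * x.2 ∨ 12 ∣ 4 * x.1 * x.2) ∧
        2 * (4 * x.1 * x.2) ∣ x.2.factorial,
      4 * x.1 * x.2 ∈ sylowExcludedOrders ∨
        4 * x.1 * x.2 = 60 ∨ 4 * x.1 * x.2 = 120 ∨ 4 * x.1 = 24 ∧ x.2 = 7 := by
    decide +kernel
  exact hcheck (b, n) <| Finset.mem_filter.mpr
    ⟨Finset.mem_product.mpr ⟨Finset.mem_range.mpr hb, Finset.mem_range.mpr hn40⟩,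
      hn, hn1, hlt', hdvd, hfac⟩

end Numerics

section Main

variable {G : Type*} [Group G] [Finite G] [IsSimpleGroup G]

lemma exists_normalizer_card_mul_index (hns : ¬ Group.IsSolvable G) (htp : (1 / 2) ^ 40 < tp G)
    {p : ℕ} (hp : p.Prime) (hpG : p ∣ Nat.card G) :
    ∃ H : Subgroup G, ∃ k, Nat.card H = p ∧ ¬ p ∣ (normalizer (H : Set G)).index ∧
      (normalizer (H : Set G)).index ≠ 1 ∧
      2 * Nat.card G ∣ (normalizer (H : Set G)).index.factorial ∧
      Nat.card (normalizer (H : Set G)) * ((normalizer (H : Set G)).index - 1) = k * p ^ 2 ∧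
      k * (p - 1) < 40 := by
  have : Fact p.Prime := ⟨hp⟩
  obtain ⟨H, hH, hindex⟩ := exists_card_eq_and_not_dvd_index_normalizer hp hpG
  obtain ⟨k, hk, hk40⟩ := exists_card_normalizer_mul_index_sub_one_eq htp hp hH
  have hne : normalizer (H : Set G) ≠ ⊤ := by
    refine normalizer_ne_top_of_isPGroup hns (IsPGroup.of_card (hH.trans (pow_one p).symm)) ?_
    rintro rfl
    exact hp.one_lt.ne (card_bot.symm.trans hH)
  exact ⟨H, k, hH, hindex, mt index_eq_one.mp hne, two_mul_card_dvd_factorial_index hns hne, hk,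
    hk40⟩

lemma two_dvd_card_of_lt_tp (hns : ¬ Group.IsSolvable G) (htp : (1 / 2) ^ 40 < tp G) :
    2 ∣ Nat.card G := by
  by_contra h2
  set p := (Nat.card G).minFac
  have hp : p.Prime := Nat.minFac_prime Finite.one_lt_card.ne'
  have hpG : p ∣ Nat.card G := Nat.minFac_dvd _
  have hp3 : 3 ≤ p := hp.two_le.lt_of_ne fun h => h2 (h ▸ hpG)
  have hcube : p ^ 3 ∣ Nat.card G :=
    (minFac_pow_three_dvd_card_or_twelve_dvd_card hns).resolve_right fun h =>
      h2 (dvd_trans (by decide) h)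
  obtain ⟨H, k, -, hpn, hn1, hfac, hk, hk40⟩ := exists_normalizer_card_mul_index hns htp hp hpG
  rw [← card_mul_index (normalizer (H : Set G))] at hcube hfac
  have hpn' : p < (normalizer (H : Set G)).index := by
    refine lt_of_le_of_ne (Nat.minFac_le_of_dvd ?_ (index_dvd_card _)) fun h => hpn (h ▸ dvd_rfl)
    exact (Nat.two_le_iff _).mpr ⟨index_ne_zero_of_finite, hn1⟩
  have hc := (((hp.coprime_iff_not_dvd).mpr hpn).pow_left 3).dvd_of_dvd_mul_right hcube
  have hcfac := (dvd_mul_of_dvd_right (dvd_mul_right _ _) 2).trans hfac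
  exact (forty_le_mul_sub_one_of_three_le hp3 hpn' hc Nat.card_pos hcfac hk).not_gt hk40

lemma exists_surjective_alternatingGroup_of_lt_tp (hns : ¬ Group.IsSolvable G)
    (htp : (1 / 2) ^ 40 < tp G) :
    ∃ f : G →* alternatingGroup (Fin 5), Function.Surjective f := by
  have h2G := two_dvd_card_of_lt_tp hns htp
  obtain ⟨H, k, hH, hn, hn1, hfac, hk, hk40⟩ :=
    exists_normalizer_card_mul_index hns htp Nat.prime_two h2G
  have hdvd := minFac_pow_three_dvd_card_or_twelve_dvd_card hns
  rw [(Nat.minFac_eq_two_iff _).mpr h2G, ← card_mul_index (normalizer (H : Set G))] at hdvd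
  have hcases := mul_mem_sylowExcludedOrders_or_of_mul_sub_one_lt (Nat.two_dvd_ne_zero.mp hn) hn1
    Nat.card_pos hdvd (by rwa [card_mul_index]) (by rw [hk]; omega)
  rw [card_mul_index] at hcases
  rcases hcases with h | h | h | ⟨hc, hn7⟩
  · exact absurd h (card_notMem_sylowExcludedOrders hns)
  · exact exists_surjective_alternatingGroup_of_card_eq_60 hns h
  · exact absurd h (card_ne_120 hns)
  · have hG : Nat.card G = 168 := by rw [← card_mul_index (normalizer (H : Set G)), hc, hn7]
    obtain ⟨t, u, ht, hu, htu⟩ :=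
      exists_commute_of_card_eq_two hH Nat.prime_three (by rw [hc]; decide)
    exact absurd htu (not_commute_of_card_eq_168 hns hG ht hu)

end Main

section Reduction

variable {G : Type*} [Group G]

lemma isSimpleGroup_quotient_of_maximal {N : Subgroup G} [N.Normal]
    (hN : Maximal (fun M : Subgroup G => M.Normal ∧ M ≠ ⊤) N) : IsSimpleGroup (G ⧸ N) := by
  have := QuotientGroup.nontrivial_iff.mpr hN.prop.2
  refine ⟨fun M hM => or_iff_not_imp_right.mpr fun hMtop => ?_⟩
  have hinj := comap_injective (QuotientGroup.mk'_surjective N)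
  have hle : N ≤ M.comap (QuotientGroup.mk' N) := QuotientGroup.le_comap_mk' N M
  have hge := hN.le_of_ge ⟨hM.comap _, fun h => hMtop (hinj (h.trans (comap_top _).symm))⟩ hle
  refine hinj ((hge.antisymm hle).trans ?_)
  rw [MonoidHom.comap_bot, QuotientGroup.ker_mk']

lemma exists_isSimpleGroup_section [Finite G] (hG : ¬ Group.IsSolvable G) :
    ∃ (K : Subgroup G) (N : Subgroup K) (_ : N.Normal),
      IsSimpleGroup (K ⧸ N) ∧ ¬ Group.IsSolvable (K ⧸ N) := by
  obtain ⟨K, hK⟩ := (Set.toFinite {K : Subgroup G | ¬ Group.IsSolvable K}).exists_minimal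
    ⟨⊤, fun (_ : Group.IsSolvable (⊤ : Subgroup G)) => hG <|
      Group.isSolvable_of_surjective (f := (⊤ : Subgroup G).subtype) fun g => ⟨⟨g, mem_top g⟩, rfl⟩⟩
  have : Nontrivial K := not_subsingleton_iff_nontrivial.mp fun _ => hK.prop inferInstance
  obtain ⟨N, hN⟩ := (Set.toFinite {N : Subgroup K | N.Normal ∧ N ≠ ⊤}).exists_maximal
    ⟨⊥, normal_bot, bot_ne_top⟩
  have := hN.prop.1
  have hNsol : Group.IsSolvable N := by
    have hlt : N.map K.subtype < K := by
      refine (map_subtype_le N).lt_of_ne fun h => hN.prop.2 (map_injective K.subtype_injective ?_)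
      rw [h, ← MonoidHom.range_eq_map, range_subtype]
    have : Group.IsSolvable (N.map K.subtype) := not_not.mp (hK.not_prop_of_lt hlt)
    let e := N.equivMapOfInjective K.subtype K.subtype_injective
    exact Group.isSolvable_of_isSolvable_injective (f := e.toMonoidHom) e.injective
  refine ⟨K, N, hN.prop.1, isSimpleGroup_quotient_of_maximal hN, fun hQ => hK.prop ?_⟩
  exact (Group.isSolvable_iff_subgroup_quotient N).mpr ⟨hNsol, hQ⟩

end Reduction

theorem stmt13 (G : Type*) [Group G] [Finite G] (h : tp G > (1 / 2 : ℚ) ^ 40) :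
    IsSolvable G ∨ HasSectionIsomorphicTo G (alternatingGroup (Fin 5)) := by
  refine or_iff_not_imp_left.mpr fun hG => ?_
  obtain ⟨K, N, _, _, hns⟩ := exists_isSimpleGroup_section hG
  have htp : tp G ≤ tp (K ⧸ N) := (tp_le_tp_subgroup K).trans (tp_le_tp_quotient N)
  obtain ⟨f, hf⟩ := exists_surjective_alternatingGroup_of_lt_tp hns (h.trans_le htp)
  exact ⟨K, f.comp (QuotientGroup.mk' N), hf.comp (QuotientGroup.mk'_surjective N)⟩
end
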